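/- Fix integers j ≥ 1 and k ≥ 1, and define Λ_j on the positive integers by Λ_j(n) := Σ_{d·δ = n} μ(d)·(log δ)^j, where μ is the Möbius function. Then lim_{X→∞} (1/(X · (log X)^{j+k−1})) · Σ_{n ≤ X} Λ_j(n)·Λ_k(n) = jk/(j+k−1). (Equivalently, (1/X) Σ_{n≤X} Λ_j(n)Λ_k(n) ∼ (jk/(j+k−1)) (log X)^{j+k−1} as X → ∞.) -/

import Mathlib

open Filter

/-- The `j`-th higher-order von Mangoldt function on the positive integers,
`Λ_j(n) = Σ_{d ∣ n} μ(d) (log(n/d))^j`. -/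
noncomputable def vmJ (j : ℕ) (n : ℕ) : ℝ :=
  ∑ d ∈ n.divisors, (ArithmeticFunction.moebius d : ℝ) * (Real.log ((n : ℝ) / (d : ℝ))) ^ j

namespace VMPNT
open MeasureTheory Set Filter Topology

noncomputable def B (u : ℝ) : ℝ := Chebyshev.psi (Real.exp u) * Real.exp (-u)

noncomputable def F (s : ℂ) : ℂ :=
  ArithmeticFunction.vonMangoldt.LFunctionResidueClassAux (1 : ZMod 1) s

noncomputable def G (z : ℂ) : ℂ := (F (1 + z) - 1) / (1 + z)

lemma F_cont : ContinuousOn F {s | 1 ≤ s.re} :=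
  ArithmeticFunction.vonMangoldt.continuousOn_LFunctionResidueClassAux _

lemma F_eq {s : ℂ} (hs : 1 < s.re) :
    F s = LSeries (fun n => ((ArithmeticFunction.vonMangoldt n : ℝ) : ℂ)) s - 1 / (s - 1) := by
  have := ArithmeticFunction.vonMangoldt.eqOn_LFunctionResidueClassAux (q := 1) (a := 1)
    isUnit_one (show s ∈ {s : ℂ | 1 < s.re} from hs)
  unfold F
  rw [this]
  have h : (ArithmeticFunction.vonMangoldt.residueClass (1 : ZMod 1)) =
      fun n => ArithmeticFunction.vonMangoldt n := by
    ext n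
    have : (n : ZMod 1) = 1 := Subsingleton.elim _ _
    simp [ArithmeticFunction.vonMangoldt.residueClass, this]
  simp [h]

lemma G_cont : ContinuousOn G {z | 0 ≤ z.re} := by
  unfold G
  apply ContinuousOn.div
  · apply ContinuousOn.sub _ continuousOn_const
    exact F_cont.comp (by fun_prop) (fun z hz => by simpa using hz)
  · fun_prop
  · intro z hz h
    have := congrArg Complex.re h
    simp at this hz
    linarith

lemma B_nonneg (u : ℝ) : 0 ≤ B u := mul_nonneg (Chebyshev.psi_nonneg _) (Real.exp_pos _).le

lemma B_le (u : ℝ) : B u ≤ Real.log 4 + 4 := by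
  unfold B
  have := Chebyshev.psi_le_const_mul_self (Real.exp_pos u).le
  calc _ ≤ (Real.log 4 + 4) * Real.exp u * Real.exp (-u) := by gcongr
    _ = _ := by rw [mul_assoc, ← Real.exp_add]; simp

lemma B_meas : Measurable B := by
  unfold B
  exact (Chebyshev.psi_mono.measurable.comp Real.measurable_exp).mul (by fun_prop)

lemma B_neg {u : ℝ} (hu : u ≤ 0) : B u = 0 := by
  unfold B
  rw [Chebyshev.psi_eq_zero_of_le_one (by simpa using hu), zero_mul]

lemma B_sub_abs (u : ℝ) : |B u - 1| ≤ Real.log 4 + 4 := by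
  have := B_nonneg u
  have := B_le u
  have := Real.log_nonneg (show (1:ℝ) ≤ 4 by norm_num)
  rw [abs_le]; constructor <;> linarith

lemma hO : (fun n : ℕ ↦ ∑ k ∈ Finset.Icc 1 n, (ArithmeticFunction.vonMangoldt k)) =O[atTop]
    fun n ↦ (n : ℝ) ^ (1:ℝ) := by
  refine Asymptotics.IsBigO.of_bound (Real.log 4 + 4) (Eventually.of_forall fun n => ?_)
  have := Chebyshev.psi_le_const_mul_self (x := n) (by positivity)
  have h2 := Chebyshev.psi_nonneg (n : ℝ)
  unfold Chebyshev.psi at this h2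
  rw [Nat.floor_natCast] at this h2
  have he : Finset.Ioc 0 n = Finset.Icc 1 n := by ext; simp [Nat.succ_le_iff]
  rw [he] at this h2
  simpa [abs_of_nonneg h2] using this

lemma int_exp {ε : ℝ} (hε : 0 < ε) :
    IntegrableOn (fun u : ℝ => Real.exp (-(ε * u))) (Ioi 0) := by
  simpa using integrableOn_exp_mul_Ioi (a := -ε) (by linarith) 0

lemma laplace (ε : ℝ) (hε : 0 < ε) (t : ℝ) :
    ∫ u in Ioi (0:ℝ), ((B u - 1 : ℝ) : ℂ) * Complex.exp (-((ε + t * Complex.I) * u)) =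
      G (ε + t * Complex.I) := by
  set z : ℂ := ε + t * Complex.I with hz
  have hzre : z.re = ε := by simp [hz]
  have hz0 : z ≠ 0 := fun h => by rw [h] at hzre; simp at hzre; linarith
  have hz1 : 1 + z ≠ 0 := fun h => by
    have := congrArg Complex.re h; simp [hzre] at this; linarith
  have hL := LSeries_eq_mul_integral_of_nonneg (fun n => ArithmeticFunction.vonMangoldt n)
    (r := 1) zero_le_one (s := 1 + z) (by simp [hzre, hε]) hO
    (fun n => ArithmeticFunction.vonMangoldt_nonneg)
  have hch := integral_comp_exp_Ioi (fun x : ℝ => (∑ k ∈ Finset.Icc 1 ⌊x⌋₊,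
    ((ArithmeticFunction.vonMangoldt k : ℝ) : ℂ)) * (x:ℂ) ^ (-((1 + z) + 1))) 0
  rw [Real.exp_zero] at hch
  rw [← hch] at hL
  have hF := F_eq (s := 1 + z) (by simp [hzre, hε])
  rw [hL] at hF
  have hI1 : ∫ u in Ioi (0:ℝ), Complex.exp (-(z * u)) = 1 / z := by
    have := integral_exp_mul_complex_Ioi (a := -z) (by simp [hzre, hε]) 0
    simp at this
    simpa using this
  have hnorm : ∀ u : ℝ, ‖Complex.exp (-(z * u))‖ = Real.exp (-(ε * u)) := by
    intro u; rw [Complex.norm_exp]; congr 1; simp [hzre]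
  have hint1 : IntegrableOn (fun u : ℝ => Complex.exp (-(z * u))) (Ioi 0) := by
    refine Integrable.mono' (int_exp hε) (by fun_prop) ?_
    exact Eventually.of_forall fun u => (hnorm u).le
  have hintB : IntegrableOn (fun u : ℝ => ((B u : ℝ) : ℂ) * Complex.exp (-(z * u))) (Ioi 0) := by
    refine Integrable.mono' ((int_exp hε).const_mul (Real.log 4 + 4)) ?_ ?_
    · exact ((Complex.measurable_ofReal.comp B_meas).mul (by fun_prop)).aestronglyMeasurable
    · refine Eventually.of_forall fun u => ?_
      rw [norm_mul, hnorm, Complex.norm_real, Real.norm_of_nonneg (B_nonneg u)]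
      gcongr
      exact B_le u
  have hIntegral : (∫ u in Ioi (0:ℝ), Real.exp u • ((∑ k ∈ Finset.Icc 1 ⌊Real.exp u⌋₊,
      ((ArithmeticFunction.vonMangoldt k : ℝ) : ℂ)) * ((Real.exp u : ℝ):ℂ) ^ (-((1 + z) + 1))))
      = ∫ u in Ioi (0:ℝ), ((B u : ℝ) : ℂ) * Complex.exp (-(z * u)) := by
    refine integral_congr_ae (Eventually.of_forall fun u => ?_)
    simp only
    have h1 : ((Real.exp u : ℝ) : ℂ) ^ (-((1 + z) + 1)) = Complex.exp (-(2 + z) * u) := by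
      rw [Complex.cpow_def_of_ne_zero (by simp), ← Complex.ofReal_log (Real.exp_pos u).le,
        Real.log_exp]
      congr 1; ring
    have he : Finset.Ioc 0 ⌊Real.exp u⌋₊ = Finset.Icc 1 ⌊Real.exp u⌋₊ := by
      ext; simp [Nat.succ_le_iff]
    rw [h1]
    unfold B Chebyshev.psi
    rw [he, Complex.real_smul]
    push_cast
    rw [mul_left_comm, ← Complex.exp_add, mul_assoc, ← Complex.exp_add]
    congr 2; ring
  rw [hIntegral] at hF
  have : ∀ u : ℝ, ((B u - 1 : ℝ) : ℂ) * Complex.exp (-(z * u)) =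
    ((B u : ℝ) : ℂ) * Complex.exp (-(z * u)) - Complex.exp (-(z * u)) := by
    intro u; push_cast; ring
  simp_rw [this]
  rw [integral_sub hintB hint1, hI1]
  unfold G
  rw [hF, add_sub_cancel_left]
  field_simp
  ring

end VMPNT

namespace VMPNT
open MeasureTheory Set Filter Topology

noncomputable def K (T v : ℝ) : ℝ := ∫ t in (0:ℝ)..T, (1 - t / T) * Real.cos (t * v)

lemma K_eq {T v : ℝ} (hT : 0 < T) (hv : v ≠ 0) :
    K T v = (1 - Real.cos (T * v)) / (T * v ^ 2) := by
  unfold K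
  have hd : ∀ t ∈ uIcc 0 T, HasDerivAt
      (fun t => (1 - t / T) * (Real.sin (t * v) / v) - Real.cos (t * v) / (T * v ^ 2))
      ((1 - t / T) * Real.cos (t * v)) t := by
    intro t _
    have h1 : HasDerivAt (fun t : ℝ => t * v) v t := by
      simpa using (hasDerivAt_id t).mul_const v
    have h2 : HasDerivAt (fun t : ℝ => 1 - t / T) (-(1 / T)) t := by
      simpa using ((hasDerivAt_id t).div_const T).const_sub 1
    have := (h2.mul (h1.sin.div_const v)).sub (h1.cos.div_const (T * v ^ 2))
    convert! this using 1
    field_simp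
    ring
  rw [intervalIntegral.integral_eq_sub_of_hasDerivAt hd
    (Continuous.intervalIntegrable (by fun_prop) _ _)]
  simp
  field_simp
  ring

lemma K_cont (T : ℝ) : Continuous (K T) := by
  unfold K
  apply intervalIntegral.continuous_parametric_intervalIntegral_of_continuous'
  fun_prop

lemma K_zero {T : ℝ} (hT : 0 < T) : K T 0 = T / 2 := by
  unfold K
  simp only [mul_zero, Real.cos_zero, mul_one]
  rw [intervalIntegral.integral_sub (by simp) (Continuous.intervalIntegrable (by fun_prop) _ _)]
  simp
  field_simp
  ring

lemma K_nonneg {T : ℝ} (hT : 0 < T) (v : ℝ) : 0 ≤ K T v := by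
  by_cases hv : v = 0
  · rw [hv, K_zero hT]; positivity
  · rw [K_eq hT hv]
    have := Real.cos_le_one (T * v)
    apply div_nonneg <;> [linarith; positivity]

lemma K_scale {T : ℝ} (hT : 0 < T) (v : ℝ) : K T v = T * K 1 (T * v) := by
  by_cases hv : v = 0
  · rw [hv, mul_zero, K_zero hT, K_zero one_pos]; ring
  · rw [K_eq hT hv, K_eq one_pos (by positivity)]
    field_simp

lemma K_le_T {T : ℝ} (hT : 0 < T) (v : ℝ) : K T v ≤ T := by
  have : ‖K T v‖ ≤ 1 * |T - 0| := by
    unfold K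
    apply intervalIntegral.norm_integral_le_of_norm_le_const
    intro t ht
    rw [uIoc_of_le hT.le] at ht
    rw [norm_mul]
    have h1 : ‖1 - t / T‖ ≤ 1 := by
      have : t / T ≤ 1 := by rw [div_le_one hT]; exact ht.2
      have : 0 < t / T := div_pos ht.1 hT
      rw [Real.norm_eq_abs, abs_le]; constructor <;> linarith
    have h2 : ‖Real.cos (t * v)‖ ≤ 1 := Real.abs_cos_le_one _
    calc _ ≤ (1:ℝ) * 1 := by gcongr
      _ = 1 := by ring
  rw [Real.norm_of_nonneg (K_nonneg hT v), sub_zero, abs_of_pos hT, one_mul] at this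
  exact this

lemma K_bound {T : ℝ} (hT : 0 < T) (v : ℝ) : K T v ≤ (T + 2 / T) * (1 + v ^ 2)⁻¹ := by
  rw [← div_eq_mul_inv, le_div_iff₀ (by positivity), mul_add, mul_one]
  apply add_le_add (K_le_T hT v)
  by_cases hv : v = 0
  · simp [hv]; positivity
  · rw [K_eq hT hv]
    have := Real.neg_one_le_cos (T * v)
    rw [div_mul_eq_mul_div, div_le_div_iff₀ (by positivity) hT]
    nlinarith [mul_pos hT (show 0 < v^2 by positivity)]

lemma K_int {T : ℝ} (hT : 0 < T) : Integrable (K T) := by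
  refine Integrable.mono' (integrable_inv_one_add_sq.const_mul (T + 2 / T))
    (K_cont T).aestronglyMeasurable (Eventually.of_forall fun v => ?_)
  rw [Real.norm_of_nonneg (K_nonneg hT v)]
  exact K_bound hT v

lemma K_integral {T : ℝ} (hT : 0 < T) : ∫ v, K T v = ∫ v, K 1 v := by
  simp_rw [K_scale hT]
  rw [integral_const_mul, Measure.integral_comp_mul_left]
  simp [abs_of_pos hT]
  field_simp

lemma K_integral_pos : 0 < ∫ v, K 1 v := by
  rw [integral_pos_iff_support_of_nonneg (fun v => K_nonneg one_pos v) (K_int one_pos)]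
  refine (K_cont 1).isOpen_support.measure_pos volume ?_
  exact ⟨0, by simp [K_zero one_pos]⟩

lemma G_re {ε : ℝ} (hε : 0 < ε) (t y : ℝ) :
    ∫ u in Ioi (0:ℝ), (B u - 1) * Real.exp (-(ε * u)) * Real.cos (t * (y - u)) =
      (Complex.exp (t * y * Complex.I) * G (ε + t * Complex.I)).re := by
  rw [← laplace ε hε t, ← integral_const_mul]
  have h := integral_re (𝕜 := ℂ) (μ := volume.restrict (Ioi (0:ℝ)))
    (f := fun u : ℝ => Complex.exp (t * y * Complex.I) *
      (((B u - 1 : ℝ) : ℂ) * Complex.exp (-((ε + t * Complex.I) * u)))) ?_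
  · simp only [RCLike.re_to_complex] at h
    rw [← h]
    refine integral_congr_ae (Eventually.of_forall fun u => ?_)
    simp only
    rw [mul_left_comm, ← Complex.exp_add, Complex.re_ofReal_mul, Complex.exp_re, mul_assoc]
    congr 3
    · simp
    · simp; ring
  · refine Integrable.mono' ((int_exp hε).const_mul (Real.log 4 + 4)) ?_ ?_
    · have := (Complex.measurable_ofReal.comp (B_meas.sub_const 1))
      exact (measurable_const.mul (this.mul (by fun_prop))).aestronglyMeasurable
    · refine Eventually.of_forall fun u => ?_
      rw [norm_mul, norm_mul, Complex.norm_exp, Complex.norm_exp, Complex.norm_real]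
      simp
      gcongr
      exact B_sub_abs u

lemma swap {ε T : ℝ} (hε : 0 < ε) (hT : 0 < T) (y : ℝ) :
    ∫ u in Ioi (0:ℝ), (B u - 1) * Real.exp (-(ε * u)) * K T (y - u) =
    ∫ t in Ioc (0:ℝ) T, (1 - t / T) *
      (Complex.exp (t * y * Complex.I) * G (ε + t * Complex.I)).re := by
  have h1 : ∀ u, (B u - 1) * Real.exp (-(ε * u)) * K T (y - u) =
      ∫ t in Ioc (0:ℝ) T, (B u - 1) * Real.exp (-(ε * u)) *
        ((1 - t / T) * Real.cos (t * (y - u))) := by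
    intro u
    rw [integral_const_mul, K, intervalIntegral.integral_of_le hT.le]
  simp_rw [h1]
  rw [integral_integral_swap]
  · refine setIntegral_congr_fun measurableSet_Ioc fun t ht => ?_
    rw [← G_re hε, ← integral_const_mul]
    congr 1; ext u; ring
  · have hf : Integrable (fun u => (B u - 1) * Real.exp (-(ε * u))) (volume.restrict (Ioi 0)) := by
      refine Integrable.mono' ((int_exp hε).const_mul (Real.log 4 + 4)) ?_ ?_
      · exact ((B_meas.sub_const 1).mul (by fun_prop)).aestronglyMeasurable
      · refine Eventually.of_forall fun u => ?_
        rw [norm_mul, Real.norm_of_nonneg (Real.exp_pos _).le]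
        gcongr
        exact B_sub_abs u
    have hg : Integrable (fun t : ℝ => 1 - t / T) (volume.restrict (Ioc 0 T)) := by
      have : Continuous (fun t : ℝ => 1 - t / T) := by fun_prop
      exact (this.integrableOn_Icc).mono_set Ioc_subset_Icc_self
    have := hf.mul_prod hg
    refine this.mono ?_ ?_
    · apply Measurable.aestronglyMeasurable
      have := B_meas
      unfold Function.uncurry
      simp only
      fun_prop
    · refine Eventually.of_forall fun p => ?_
      simp only [Function.uncurry, norm_mul]
      have : ‖Real.cos (p.2 * (y - p.1))‖ ≤ 1 := Real.abs_cos_le_one _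
      rw [← mul_assoc]
      exact mul_le_of_le_one_right (by positivity) this

end VMPNT

namespace VMPNT
open MeasureTheory Set Filter Topology

lemma K_shift_int {T : ℝ} (hT : 0 < T) (y : ℝ) : Integrable (fun u => K T (y - u)) :=
  (K_int hT).comp_sub_left y

lemma limit_eq {T : ℝ} (hT : 0 < T) (y : ℝ) :
    ∫ u in Ioi (0:ℝ), (B u - 1) * K T (y - u) =
    ∫ t in Ioc (0:ℝ) T, (1 - t / T) *
      (Complex.exp (t * y * Complex.I) * G (t * Complex.I)).re := by
  have hL : Tendsto (fun ε : ℝ => ∫ u in Ioi (0:ℝ), (B u - 1) * Real.exp (-(ε * u)) * K T (y - u))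
      (𝓝[>] 0) (𝓝 (∫ u in Ioi (0:ℝ), (B u - 1) * K T (y - u))) := by
    refine tendsto_integral_filter_of_dominated_convergence
      (fun u => (Real.log 4 + 4) * K T (y - u)) ?_ ?_ ?_ ?_
    · refine Eventually.of_forall fun ε => ?_
      have := B_meas
      have := (K_cont T).measurable
      apply Measurable.aestronglyMeasurable
      fun_prop
    · filter_upwards [self_mem_nhdsWithin] with ε hε
      rw [ae_restrict_iff' measurableSet_Ioi]
      refine Eventually.of_forall fun u hu => ?_
      rw [norm_mul, norm_mul, Real.norm_of_nonneg (K_nonneg hT _),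
        Real.norm_of_nonneg (Real.exp_pos _).le]
      have h1 : Real.exp (-(ε * u)) ≤ 1 := by
        rw [Real.exp_le_one_iff]
        have := mul_pos (show (0:ℝ) < ε from hε) (show (0:ℝ) < u from hu)
        linarith
      have h2 := B_sub_abs u
      have h3 := K_nonneg hT (y - u)
      rw [Real.norm_eq_abs]
      calc _ ≤ (Real.log 4 + 4) * 1 * K T (y - u) := by gcongr
        _ = _ := by ring
    · exact ((K_shift_int hT y).const_mul _).integrableOn
    · refine Eventually.of_forall fun u => ?_
      have : Continuous (fun ε : ℝ => (B u - 1) * Real.exp (-(ε * u)) * K T (y - u)) := by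
        fun_prop
      have := (this.tendsto 0).mono_left (nhdsWithin_le_nhds (s := Ioi 0))
      simpa using this
  have hR : Tendsto (fun ε : ℝ => ∫ t in Ioc (0:ℝ) T, (1 - t / T) *
      (Complex.exp (t * y * Complex.I) * G (ε + t * Complex.I)).re)
      (𝓝[>] 0) (𝓝 (∫ t in Ioc (0:ℝ) T, (1 - t / T) *
      (Complex.exp (t * y * Complex.I) * G (t * Complex.I)).re)) := by
    obtain ⟨C, hC⟩ := ((isCompact_Icc (a := (0:ℝ)) (b := 1)).reProdIm
      (isCompact_Icc (a := (0:ℝ)) (b := T))).exists_bound_of_continuousOn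
      (G_cont.mono (fun z hz => (Complex.mem_reProdIm.1 hz).1.1))
    refine tendsto_integral_filter_of_dominated_convergence (fun _ => C) ?_ ?_ ?_ ?_
    · filter_upwards [self_mem_nhdsWithin] with ε hε
      apply Continuous.aestronglyMeasurable
      have : Continuous (fun t : ℝ => G (ε + t * Complex.I)) := by
        refine G_cont.comp_continuous (by fun_prop) fun t => ?_
        have : (0:ℝ) < ε := hε
        simp [this.le]
      fun_prop
    · filter_upwards [Ioo_mem_nhdsGT (show (0:ℝ) < 1 by norm_num)] with ε hε
      rw [ae_restrict_iff' measurableSet_Ioc]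
      refine Eventually.of_forall fun t ht => ?_
      have h1 : ‖1 - t / T‖ ≤ 1 := by
        have : t / T ≤ 1 := by rw [div_le_one hT]; exact ht.2
        have : 0 < t / T := div_pos ht.1 hT
        rw [Real.norm_eq_abs, abs_le]; constructor <;> linarith
      have h2 := hC (ε + t * Complex.I) (by
        rw [Complex.mem_reProdIm]; simp [hε.1.le, hε.2.le, ht.1.le, ht.2])
      rw [norm_mul]
      have h3 : ‖(Complex.exp (t * y * Complex.I) * G (ε + t * Complex.I)).re‖ ≤ C := by
        refine (Complex.abs_re_le_norm _).trans ?_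
        rw [norm_mul, ← Complex.ofReal_mul, Complex.norm_exp_ofReal_mul_I, one_mul]
        exact h2
      calc _ ≤ 1 * C := by gcongr
        _ = C := one_mul C
    · simp
    · refine Eventually.of_forall fun t => ?_
      have h0 : (t * Complex.I) ∈ {z : ℂ | 0 ≤ z.re} := by simp
      have h1 : Tendsto (fun ε : ℝ => G (ε + t * Complex.I)) (𝓝[>] 0) (𝓝 (G (t * Complex.I))) := by
        refine Tendsto.comp (G_cont _ h0) ?_
        apply tendsto_nhdsWithin_of_tendsto_nhds_of_eventually_within
        · have : Continuous (fun ε : ℝ => (ε:ℂ) + t * Complex.I) := by fun_prop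
          have := (this.tendsto 0).mono_left (nhdsWithin_le_nhds (s := Ioi 0))
          simpa using this
        · filter_upwards [self_mem_nhdsWithin] with ε hε
          have : (0:ℝ) < ε := hε
          simp [this.le]
      exact ((Complex.continuous_re.tendsto _).comp (h1.const_mul _)).const_mul _
  refine tendsto_nhds_unique (hL.congr' ?_) hR
  filter_upwards [self_mem_nhdsWithin] with ε hε
  exact swap hε hT y

lemma riemann_lebesgue {T : ℝ} (hT : 0 < T) :
    Tendsto (fun y : ℝ => ∫ u in Ioi (0:ℝ), (B u - 1) * K T (y - u)) atTop (𝓝 0) := by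
  simp_rw [limit_eq hT]
  set g : ℝ → ℂ := (Ioc (0:ℝ) T).indicator (fun t => ((1 - t / T : ℝ) : ℂ) * G (t * Complex.I))
  have hGc : Continuous (fun t : ℝ => G (t * Complex.I)) :=
    G_cont.comp_continuous (by fun_prop) fun t => by simp
  have h := (Real.tendsto_integral_exp_smul_cocompact g).mono_left atBot_le_cocompact
  have hy : Tendsto (fun y : ℝ => -(1 / (2 * Real.pi)) * y) atTop atBot :=
    tendsto_id.const_mul_atTop_of_neg (by have := Real.pi_pos; simp; positivity)
  have h2 := (Complex.continuous_re.tendsto _).comp (h.comp hy)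
  simp only [Complex.zero_re] at h2
  refine h2.congr fun y => ?_
  simp only [Function.comp]
  have : ∀ v : ℝ, (Real.fourierChar (-(v * (-(1 / (2 * Real.pi)) * y)))) • g v =
      (Ioc (0:ℝ) T).indicator (fun t : ℝ => ((1 - t / T : ℝ) : ℂ) *
        (Complex.exp (t * y * Complex.I) * G (t * Complex.I))) v := by
    intro v
    by_cases hv : v ∈ Ioc 0 T
    · simp only [g, indicator_of_mem hv, Circle.smul_def, Real.fourierChar_apply, smul_eq_mul]
      rw [mul_left_comm]
      congr 3
      have := Real.pi_ne_zero
      push_cast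
      have : (Real.pi : ℂ) ≠ 0 := by exact_mod_cast this
      field_simp
    · simp only [g, indicator_of_notMem hv, smul_zero]
  simp_rw [this]
  rw [integral_indicator measurableSet_Ioc]
  have h3 := integral_re (𝕜 := ℂ) (μ := volume.restrict (Ioc (0:ℝ) T))
    (f := fun t : ℝ => ((1 - t / T : ℝ) : ℂ) *
        (Complex.exp (t * y * Complex.I) * G (t * Complex.I))) ?_
  · simp only [RCLike.re_to_complex] at h3
    rw [← h3]
    refine integral_congr_ae (Eventually.of_forall fun t => ?_)
    simp only
    rw [Complex.re_ofReal_mul]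
  · refine Continuous.integrableOn_Ioc ?_
    fun_prop

lemma main_conv {T : ℝ} (hT : 0 < T) :
    Tendsto (fun y : ℝ => ∫ v, B (y - v) * K T v) atTop (𝓝 (∫ v, K 1 v)) := by
  have hB : ∀ y, Integrable (fun u => B u * K T (y - u)) := by
    intro y
    refine Integrable.mono' ((K_shift_int hT y).const_mul (Real.log 4 + 4)) ?_ ?_
    · have := B_meas
      have := (K_cont T).measurable
      apply Measurable.aestronglyMeasurable
      fun_prop
    · refine Eventually.of_forall fun u => ?_
      rw [norm_mul, Real.norm_of_nonneg (K_nonneg hT _), Real.norm_of_nonneg (B_nonneg u)]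
      have := K_nonneg hT (y - u)
      gcongr
      exact B_le u
  have h1 : Tendsto (fun y : ℝ => ∫ u in Ioi (0:ℝ), K T (y - u)) atTop (𝓝 (∫ v, K 1 v)) := by
    rw [← K_integral hT]
    have h : ∀ y : ℝ, ∫ u in Ioi (0:ℝ), K T (y - u) = ∫ v, (Iio y).indicator (K T) v := by
      intro y
      rw [← integral_indicator measurableSet_Ioi, ← integral_sub_left_eq_self _ _ y]
      congr 1; ext v
      by_cases hv : v < y
      · rw [indicator_of_mem (by simpa using hv), indicator_of_mem (by simpa using hv)]; simp
      · rw [indicator_of_notMem (by simpa using hv), indicator_of_notMem (by simpa using hv)]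
    simp_rw [h]
    refine tendsto_integral_filter_of_dominated_convergence (K T) ?_ ?_ (K_int hT) ?_
    · exact Eventually.of_forall fun y =>
        ((K_cont T).measurable.indicator measurableSet_Iio).aestronglyMeasurable
    · refine Eventually.of_forall fun y => Eventually.of_forall fun v => ?_
      rw [Real.norm_of_nonneg (indicator_nonneg (fun _ _ => K_nonneg hT _) _)]
      exact indicator_le_self' (fun _ _ => K_nonneg hT _) _
    · refine Eventually.of_forall fun v => ?_
      apply tendsto_const_nhds.congr'
      filter_upwards [eventually_gt_atTop v] with y hy
      rw [indicator_of_mem (by simpa using hy)]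
  have h2 := (riemann_lebesgue hT).add h1
  rw [zero_add] at h2
  refine h2.congr fun y => ?_
  rw [← integral_add]
  · rw [← integral_sub_left_eq_self (fun v => B (y - v) * K T v) volume y]
    rw [← integral_indicator measurableSet_Ioi]
    congr 1; ext u
    by_cases hu : 0 < u
    · rw [indicator_of_mem (by simpa using hu)]; simp; ring
    · rw [indicator_of_notMem (by simpa using hu)]; simp [B_neg (not_lt.1 hu)]
  · have := (hB y).sub (K_shift_int hT y)
    refine (this.congr (Eventually.of_forall fun u => ?_)).integrableOn
    simp; ring
  · exact (K_shift_int hT y).integrableOn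

end VMPNT

namespace VMPNT
open MeasureTheory Set Filter Topology

lemma K_mass {δ κ : ℝ} (hδ : 0 < δ) (hκ : 0 < κ) :
    ∃ T : ℝ, 0 < T ∧ (1 - κ) * (∫ v, K 1 v) ≤ ∫ v in Ioc (-δ) δ, K T v := by
  have hc := K_integral_pos
  have h : Tendsto (fun T : ℝ => ∫ v in (-(T * δ))..(T * δ), K 1 v) atTop (𝓝 (∫ v, K 1 v)) := by
    apply intervalIntegral_tendsto_integral (K_int one_pos)
    · exact tendsto_neg_atTop_atBot.comp (tendsto_id.atTop_mul_const hδ)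
    · exact tendsto_id.atTop_mul_const hδ
  have h1 := (h.eventually (lt_mem_nhds (show (1 - κ) * (∫ v, K 1 v) < ∫ v, K 1 v by nlinarith))).and
    (eventually_gt_atTop 0)
  obtain ⟨T, h1, hT⟩ := h1.exists
  refine ⟨T, hT, ?_⟩
  rw [← intervalIntegral.integral_of_le (by linarith)]
  simp_rw [K_scale hT]
  rw [intervalIntegral.integral_const_mul, intervalIntegral.mul_integral_comp_mul_left]
  simpa using h1.le

lemma B_shift {y z δ : ℝ} (h1 : y ≤ z) (h2 : z ≤ y + 2 * δ) : B y * Real.exp (-(2 * δ)) ≤ B z := by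
  unfold B
  rw [mul_assoc, ← Real.exp_add]
  have := Chebyshev.psi_mono (Real.exp_le_exp.2 h1)
  have h3 := Chebyshev.psi_nonneg (Real.exp y)
  gcongr
  linarith

lemma BK_int {T : ℝ} (hT : 0 < T) (y : ℝ) : Integrable (fun v => B (y - v) * K T v) := by
  refine Integrable.mono' ((K_int hT).const_mul (Real.log 4 + 4)) ?_ ?_
  · have := B_meas
    have := (K_cont T).measurable
    apply Measurable.aestronglyMeasurable
    fun_prop
  · refine Eventually.of_forall fun u => ?_
    rw [norm_mul, Real.norm_of_nonneg (K_nonneg hT _), Real.norm_of_nonneg (B_nonneg _)]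
    have := K_nonneg hT u
    gcongr
    exact B_le _

lemma upper {T : ℝ} (hT : 0 < T) (y δ : ℝ) :
    B y * Real.exp (-(2 * δ)) * (∫ v in Ioc (-δ) δ, K T v) ≤ ∫ v, B ((y + δ) - v) * K T v := by
  rw [← integral_const_mul]
  calc _ ≤ ∫ v in Ioc (-δ) δ, B ((y + δ) - v) * K T v := by
        refine setIntegral_mono_on ((K_int hT).const_mul _).integrableOn (BK_int hT _).integrableOn
          measurableSet_Ioc fun v hv => ?_
        have := K_nonneg hT v
        gcongr
        exact B_shift (by linarith [hv.2]) (by linarith [hv.1])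
    _ ≤ _ := setIntegral_le_integral (BK_int hT _)
        (Eventually.of_forall fun v => mul_nonneg (B_nonneg _) (K_nonneg hT _))

lemma lower {T : ℝ} (hT : 0 < T) (y δ : ℝ) :
    ∫ v, B ((y - δ) - v) * K T v ≤ B y * Real.exp (2 * δ) * (∫ v, K 1 v)
      + (Real.log 4 + 4) * ((∫ v, K 1 v) - ∫ v in Ioc (-δ) δ, K T v) := by
  rw [← K_integral hT]
  have hs := integral_add_compl (measurableSet_Ioc (a := -δ) (b := δ)) (BK_int hT (y - δ))
  have hs2 := integral_add_compl (measurableSet_Ioc (a := -δ) (b := δ)) (K_int hT)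
  rw [← hs]
  have h1 : ∫ v in Ioc (-δ) δ, B ((y - δ) - v) * K T v ≤ B y * Real.exp (2 * δ) * (∫ v, K T v) := by
    rw [← integral_const_mul]
    have e1 : ∀ v, 0 ≤ B y * Real.exp (2 * δ) * K T v := fun v =>
      mul_nonneg (mul_nonneg (B_nonneg _) (Real.exp_pos _).le) (K_nonneg hT _)
    refine le_trans ?_ (setIntegral_le_integral (s := Ioc (-δ) δ) ((K_int hT).const_mul _)
      (Eventually.of_forall e1))
    refine setIntegral_mono_on (BK_int hT _).integrableOn ((K_int hT).const_mul _).integrableOn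
          measurableSet_Ioc fun v hv => ?_
    have := K_nonneg hT v
    gcongr
    have := B_shift (y := y - δ - v) (z := y) (δ := δ) (by linarith [hv.1]) (by linarith [hv.2])
    rw [Real.exp_neg, ← div_eq_mul_inv, div_le_iff₀ (Real.exp_pos _)] at this
    exact this
  have h2 : ∫ v in (Ioc (-δ) δ)ᶜ, B ((y - δ) - v) * K T v ≤
      (Real.log 4 + 4) * ∫ v in (Ioc (-δ) δ)ᶜ, K T v := by
    rw [← integral_const_mul]
    refine setIntegral_mono_on (BK_int hT _).integrableOn ((K_int hT).const_mul _).integrableOn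
          measurableSet_Ioc.compl fun v hv => ?_
    have := K_nonneg hT v
    gcongr
    exact B_le _
  have h3 : (∫ v, K T v) - ∫ v in Ioc (-δ) δ, K T v = ∫ v in (Ioc (-δ) δ)ᶜ, K T v := by
    rw [← hs2]; ring
  rw [h3]
  linarith

theorem B_tendsto : Tendsto B atTop (𝓝 1) := by
  have hc := K_integral_pos
  set c := ∫ v, K 1 v with hcdef
  rw [Metric.tendsto_nhds]
  intro η hη
  set C := Real.log 4 + 4 with hC
  have hu : Tendsto (fun κ : ℝ => Real.exp (2 * κ) * (1 + κ) / (1 - κ)) (𝓝[>] 0) (𝓝 1) := by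
    have : ContinuousAt (fun κ : ℝ => Real.exp (2 * κ) * (1 + κ) / (1 - κ)) 0 := by
      apply ContinuousAt.div <;> [fun_prop; fun_prop; norm_num]
    have := this.tendsto.mono_left (nhdsWithin_le_nhds (s := Ioi 0))
    simpa using this
  have hl : Tendsto (fun κ : ℝ => Real.exp (-(2 * κ)) * (1 - κ - C * κ)) (𝓝[>] 0) (𝓝 1) := by
    have : Continuous (fun κ : ℝ => Real.exp (-(2 * κ)) * (1 - κ - C * κ)) := by fun_prop
    have := (this.tendsto 0).mono_left (nhdsWithin_le_nhds (s := Ioi 0))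
    simpa using this
  obtain ⟨κ, ⟨hκu, hκl⟩, hκ⟩ := (((hu.eventually (gt_mem_nhds (show 1 < 1 + η by linarith))).and
    (hl.eventually (lt_mem_nhds (show 1 - η < 1 by linarith)))).and
    (Ioo_mem_nhdsGT (show (0:ℝ) < 1 / 2 by norm_num))).exists
  obtain ⟨hκ0, hκ1⟩ := hκ
  obtain ⟨T, hT, hmass⟩ := K_mass hκ0 hκ0
  rw [← hcdef] at hmass
  have hconv := main_conv hT
  rw [← hcdef] at hconv
  have e1 := (hconv.comp (tendsto_atTop_add_const_right atTop κ tendsto_id)).eventually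
    (gt_mem_nhds (show c < (1 + κ) * c by nlinarith))
  have e2 := (hconv.comp (tendsto_atTop_add_const_right atTop (-κ) tendsto_id)).eventually
    (lt_mem_nhds (show (1 - κ) * c < c by nlinarith))
  filter_upwards [e1, e2] with y h1 h2
  simp only [Function.comp, id] at h1 h2
  have hup := upper hT y κ
  have hlo := lower hT y κ
  rw [← hcdef, sub_eq_add_neg y κ] at hlo
  have hB := B_nonneg y
  rw [Real.dist_eq, abs_lt]
  have hCpos : 0 ≤ C := by have := Real.log_nonneg (show (1:ℝ) ≤ 4 by norm_num); linarith
  constructor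
  · have : (1 - κ) * c < (B y * Real.exp (2 * κ) + C * κ) * c := by
      nlinarith [mul_le_mul_of_nonneg_left hmass hCpos]
    have := lt_of_mul_lt_mul_right this hc.le
    have h4 : Real.exp (-(2 * κ)) * (1 - κ - C * κ) < B y := by
      rw [Real.exp_neg, inv_mul_lt_iff₀ (Real.exp_pos _)]
      linarith
    linarith
  · have h5 : B y * Real.exp (-(2 * κ)) * ((1 - κ) * c) ≤
        B y * Real.exp (-(2 * κ)) * (∫ v in Ioc (-κ) κ, K T v) := by gcongr
    have : (B y * Real.exp (-(2 * κ)) * (1 - κ)) * c < (1 + κ) * c := by linarith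
    have := lt_of_mul_lt_mul_right this hc.le
    have h4 : B y < Real.exp (2 * κ) * (1 + κ) / (1 - κ) := by
      rw [lt_div_iff₀ (by linarith)]
      rw [Real.exp_neg, mul_right_comm, ← div_eq_mul_inv, div_lt_iff₀ (Real.exp_pos _)] at this
      linarith
    linarith

/-- The prime number theorem, in uniform form. -/
theorem pnt (ε : ℝ) (hε : 0 < ε) : ∃ C : ℝ, ∀ N : ℕ, 1 ≤ N →
    |(∑ n ∈ Finset.Icc 1 N, ArithmeticFunction.vonMangoldt n) - N| ≤ ε * N + C := by
  have h := Metric.tendsto_atTop.1 B_tendsto ε hε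
  obtain ⟨y, hy⟩ := h
  have hlog4 := Real.log_nonneg (show (1:ℝ) ≤ 4 by norm_num)
  refine ⟨(Real.log 4 + 5) * Real.exp y, fun N hN => ?_⟩
  have hN0 : (0:ℝ) < N := by exact_mod_cast hN
  have he : Finset.Ioc 0 N = Finset.Icc 1 N := by ext; simp [Nat.succ_le_iff]
  have hpsi : ∑ n ∈ Finset.Icc 1 N, ArithmeticFunction.vonMangoldt n = Chebyshev.psi N := by
    rw [Chebyshev.psi, Nat.floor_natCast, he]
  rw [hpsi]
  by_cases hc : y ≤ Real.log N
  · have := hy _ hc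
    rw [Real.dist_eq] at this
    unfold B at this
    rw [Real.exp_neg, Real.exp_log hN0, ← div_eq_mul_inv, ← div_self hN0.ne', ← sub_div, abs_div,
      abs_of_pos hN0, div_lt_iff₀ hN0] at this
    have : 0 < (Real.log 4 + 5) * Real.exp y := by positivity
    linarith
  · have h1 : (N:ℝ) ≤ Real.exp y := by
      rw [← Real.log_le_iff_le_exp hN0]; linarith
    have h2 := Chebyshev.psi_nonneg (N:ℝ)
    have h3 := Chebyshev.psi_le_const_mul_self hN0.le
    have h4 : (Real.log 4 + 5) * N ≤ (Real.log 4 + 5) * Real.exp y := by gcongr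
    have h5 : 0 ≤ ε * N := by positivity
    rw [abs_le]; constructor <;> nlinarith

end VMPNT

namespace VMPNT
open MeasureTheory Set Filter Topology

noncomputable def S (f : ArithmeticFunction ℝ) (N : ℕ) : ℝ := ∑ n ∈ Finset.Icc 1 N, f n

noncomputable def L (N : ℕ) : ℝ := 1 + Real.log N

lemma one_le_L (N : ℕ) : 1 ≤ L N := by
  have := Real.log_natCast_nonneg N
  unfold L; linarith

lemma L_pos (N : ℕ) : 0 < L N := lt_of_lt_of_le one_pos (one_le_L N)

lemma L_mono {M N : ℕ} (h : M ≤ N) : L M ≤ L N := by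
  rcases Nat.eq_zero_or_pos M with rfl | hM
  · have := one_le_L N
    simpa [L] using this
  · unfold L
    have : (0:ℝ) < M := by exact_mod_cast hM
    gcongr

def LitF (u : ℕ → ℝ) (a : ℕ) : Prop :=
  ∀ ε : ℝ, 0 < ε → ∃ C : ℝ, 0 ≤ C ∧ ∀ N : ℕ, 1 ≤ N → |u N| ≤ ε * (N * L N ^ a) + C

def BdF (u : ℕ → ℝ) (a : ℕ) : Prop :=
  ∃ C : ℝ, 0 ≤ C ∧ ∀ N : ℕ, 1 ≤ N → |u N| ≤ C * (N * L N ^ a)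

lemma NL_nonneg (N a : ℕ) : 0 ≤ (N:ℝ) * L N ^ a := by
  have := L_pos N
  positivity

lemma one_le_NL {N : ℕ} (hN : 1 ≤ N) (a : ℕ) : 1 ≤ (N:ℝ) * L N ^ a := by
  have h1 : (1:ℝ) ≤ N := by exact_mod_cast hN
  have h2 := one_le_pow₀ (one_le_L N) (n := a)
  nlinarith

lemma NL_mono {N a b : ℕ} (h : a ≤ b) : (N:ℝ) * L N ^ a ≤ (N:ℝ) * L N ^ b := by
  have := pow_le_pow_right₀ (one_le_L N) h
  gcongr

lemma LitF.add {u v : ℕ → ℝ} {a : ℕ} (hu : LitF u a) (hv : LitF v a) :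
    LitF (fun N => u N + v N) a := by
  intro ε hε
  obtain ⟨C, hC, h1⟩ := hu (ε / 2) (by positivity)
  obtain ⟨D, hD, h2⟩ := hv (ε / 2) (by positivity)
  refine ⟨C + D, by positivity, fun N hN => ?_⟩
  have := h1 N hN
  have := h2 N hN
  have := abs_add_le (u N) (v N)
  simp only
  linarith

lemma LitF.const_mul {u : ℕ → ℝ} {a : ℕ} (hu : LitF u a) (c : ℝ) :
    LitF (fun N => c * u N) a := by
  intro ε hε
  obtain ⟨C, hC, h1⟩ := hu (ε / (|c| + 1)) (by positivity)
  refine ⟨|c| * C, by positivity, fun N hN => ?_⟩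
  have h2 := h1 N hN
  rw [abs_mul]
  have h3 : |c| * (ε / (|c| + 1)) ≤ ε := by
    rw [← mul_div_assoc, div_le_iff₀ (by positivity)]
    nlinarith [abs_nonneg c]
  calc |c| * |u N| ≤ |c| * (ε / (|c| + 1) * (N * L N ^ a) + C) := by gcongr
    _ = (|c| * (ε / (|c| + 1))) * (N * L N ^ a) + |c| * C := by ring
    _ ≤ _ := by
      have := NL_nonneg N a
      gcongr

lemma LitF.dom {u v : ℕ → ℝ} {a : ℕ} (hu : LitF u a) (h : ∀ N, 1 ≤ N → |v N| ≤ |u N|) :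
    LitF v a := by
  intro ε hε
  obtain ⟨C, hC, h1⟩ := hu ε hε
  exact ⟨C, hC, fun N hN => (h N hN).trans (h1 N hN)⟩

lemma LitF.mono {u : ℕ → ℝ} {a b : ℕ} (hu : LitF u a) (h : a ≤ b) : LitF u b := by
  intro ε hε
  obtain ⟨C, hC, h1⟩ := hu ε hε
  refine ⟨C, hC, fun N hN => (h1 N hN).trans ?_⟩
  have := NL_mono (N := N) h
  gcongr

lemma LitF.bdF {u : ℕ → ℝ} {a : ℕ} (hu : LitF u a) : BdF u a := by
  obtain ⟨C, hC, h1⟩ := hu 1 one_pos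
  refine ⟨1 + C, by positivity, fun N hN => (h1 N hN).trans ?_⟩
  have := one_le_NL hN a
  nlinarith

lemma BdF.litF {u : ℕ → ℝ} {b : ℕ} (hu : BdF u b) : LitF u (b + 1) := by
  intro ε hε
  obtain ⟨A, hA, h1⟩ := hu
  refine ⟨A * (Real.exp (A / ε) * (A / ε) ^ b), by positivity, fun N hN => (h1 N hN).trans ?_⟩
  have hL := L_pos N
  have hN0 : (0:ℝ) < N := by exact_mod_cast hN
  by_cases hc : A / ε ≤ L N
  · have h2 : A ≤ ε * L N := by
      rw [div_le_iff₀ hε] at hc; linarith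
    have : A * (N * L N ^ b) ≤ ε * L N * (N * L N ^ b) := by
      have := NL_nonneg N b
      gcongr
    have h3 : 0 ≤ A * (Real.exp (A / ε) * (A / ε) ^ b) := by positivity
    calc _ ≤ _ := this
      _ = ε * (N * L N ^ (b + 1)) := by ring
      _ ≤ _ := by linarith
  · push Not at hc
    have h2 : (N:ℝ) ≤ Real.exp (A / ε) := by
      rw [← Real.log_le_iff_le_exp hN0]; unfold L at hc; linarith
    have h3 := NL_nonneg N (b + 1)
    have : A * (N * L N ^ b) ≤ A * (Real.exp (A / ε) * (A / ε) ^ b) := by gcongr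
    have : 0 ≤ ε * (N * L N ^ (b + 1)) := by positivity
    linarith

lemma BdF.add {u v : ℕ → ℝ} {a : ℕ} (hu : BdF u a) (hv : BdF v a) :
    BdF (fun N => u N + v N) a := by
  obtain ⟨C, hC, h1⟩ := hu
  obtain ⟨D, hD, h2⟩ := hv
  refine ⟨C + D, by positivity, fun N hN => ?_⟩
  have := h1 N hN
  have := h2 N hN
  have := abs_add_le (u N) (v N)
  simp only
  linarith

lemma BdF.const_mul {u : ℕ → ℝ} {a : ℕ} (hu : BdF u a) (c : ℝ) :
    BdF (fun N => c * u N) a := by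
  obtain ⟨C, hC, h1⟩ := hu
  refine ⟨|c| * C, by positivity, fun N hN => ?_⟩
  rw [abs_mul, mul_assoc]
  have := h1 N hN
  gcongr

lemma BdF.dom {u v : ℕ → ℝ} {a : ℕ} (hu : BdF u a) (h : ∀ N, 1 ≤ N → |v N| ≤ |u N|) :
    BdF v a := by
  obtain ⟨C, hC, h1⟩ := hu
  exact ⟨C, hC, fun N hN => (h N hN).trans (h1 N hN)⟩

/-- `L N` is at most `δ N + C`. -/
lemma L_le (δ : ℝ) (hδ : 0 < δ) : ∃ C : ℝ, 0 ≤ C ∧ ∀ N : ℕ, 1 ≤ N → L N ≤ δ * N + C := by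
  refine ⟨|Real.log δ|, abs_nonneg _, fun N hN => ?_⟩
  have hN0 : (0:ℝ) < N := by exact_mod_cast hN
  have h1 := Real.log_le_sub_one_of_pos (show 0 < δ * N by positivity)
  rw [Real.log_mul hδ.ne' hN0.ne'] at h1
  have := neg_abs_le (Real.log δ)
  unfold L; linarith

lemma LitF.log_mul {u : ℕ → ℝ} {a : ℕ} (hu : LitF u a) :
    LitF (fun N => Real.log N * u N) (a + 1) := by
  intro ε hε
  obtain ⟨C, hC, h1⟩ := hu (ε / 2) (by positivity)
  obtain ⟨D, hD, h2⟩ := L_le (ε / 2 / (C + 1)) (by positivity)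
  refine ⟨C * D, by positivity, fun N hN => ?_⟩
  have h3 := h1 N hN
  have h4 := h2 N hN
  have h5 := Real.log_natCast_nonneg N
  have hL := L_pos N
  have hN0 : (0:ℝ) < N := by exact_mod_cast hN
  rw [abs_mul, abs_of_nonneg h5]
  have hle : Real.log N ≤ L N := by unfold L; linarith
  have h6 : C * (ε / 2 / (C + 1)) ≤ ε / 2 := by
    rw [← mul_div_assoc, div_le_iff₀ (by positivity)]
    nlinarith
  have h7 : (N:ℝ) ≤ N * L N ^ (a + 1) := by
    have := one_le_pow₀ (one_le_L N) (n := a + 1)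
    nlinarith
  calc Real.log N * |u N| ≤ L N * (ε / 2 * (N * L N ^ a) + C) := by gcongr
    _ = ε / 2 * (N * L N ^ (a + 1)) + C * L N := by ring
    _ ≤ ε / 2 * (N * L N ^ (a + 1)) + C * (ε / 2 / (C + 1) * N + D) := by gcongr
    _ = ε / 2 * (N * L N ^ (a + 1)) + (C * (ε / 2 / (C + 1))) * N + C * D := by ring
    _ ≤ ε / 2 * (N * L N ^ (a + 1)) + (ε / 2) * (N * L N ^ (a + 1)) + C * D := by gcongr
    _ = _ := by ring

/-! Summation lemmas. -/

lemma S_add (f g : ArithmeticFunction ℝ) (N : ℕ) : S (f + g) N = S f N + S g N := by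
  simp [S, Finset.sum_add_distrib]

lemma S_smul (c : ℝ) (f : ArithmeticFunction ℝ) (N : ℕ) : S (c • f) N = c * S f N := by
  simp [S, Finset.mul_sum]

lemma af_neg (f : ArithmeticFunction ℝ) : -f = (-1 : ℝ) • f := by simp

lemma af_sub_apply (f g : ArithmeticFunction ℝ) (n : ℕ) : (f - g) n = f n - g n := by
  rw [sub_eq_add_neg, af_neg, ArithmeticFunction.add_apply]; simp; ring

lemma af_sum_apply {ι : Type*} (s : Finset ι) (f : ι → ArithmeticFunction ℝ) (n : ℕ) :
    (∑ i ∈ s, f i) n = ∑ i ∈ s, f i n := by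
  classical
  induction s using Finset.induction_on with
  | empty => simp
  | insert i s hi ih => rw [Finset.sum_insert hi, Finset.sum_insert hi,
      ArithmeticFunction.add_apply, ih]

lemma S_sub (f g : ArithmeticFunction ℝ) (N : ℕ) : S (f - g) N = S f N - S g N := by
  simp [S, af_sub_apply]

lemma abel (f : ArithmeticFunction ℝ) (w : ℕ → ℝ) (N : ℕ) :
    ∑ n ∈ Finset.Icc 1 N, f n * w n
      = S f N * w N - ∑ n ∈ Finset.range N, S f n * (w (n + 1) - w n) := by
  induction N with
  | zero => simp [S]
  | succ N ih =>
    have hS : S f (N + 1) = S f N + f (N + 1) := by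
      unfold S; rw [Finset.sum_Icc_succ_top (by omega)]
    rw [Finset.sum_Icc_succ_top (by omega), ih, Finset.sum_range_succ, hS]
    ring

def Lit (f : ArithmeticFunction ℝ) (a : ℕ) : Prop := LitF (S f) a
def Bd (f : ArithmeticFunction ℝ) (a : ℕ) : Prop := BdF (S f) a

lemma Lit.add {f g : ArithmeticFunction ℝ} {a : ℕ} (hf : Lit f a) (hg : Lit g a) :
    Lit (f + g) a := by
  have := LitF.add hf hg
  simp only [← S_add] at this; exact this

lemma Lit.smul {f : ArithmeticFunction ℝ} {a : ℕ} (hf : Lit f a) (c : ℝ) :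
    Lit (c • f) a := by
  have := LitF.const_mul hf c
  simp only [← S_smul] at this; exact this

lemma Lit.neg {f : ArithmeticFunction ℝ} {a : ℕ} (hf : Lit f a) : Lit (-f) a := by
  rw [af_neg]; exact hf.smul _

lemma Lit.sub {f g : ArithmeticFunction ℝ} {a : ℕ} (hf : Lit f a) (hg : Lit g a) :
    Lit (f - g) a := by
  rw [sub_eq_add_neg]; exact hf.add hg.neg

lemma Lit.zero (a : ℕ) : Lit 0 a := by
  intro ε hε
  refine ⟨0, le_rfl, fun N hN => ?_⟩
  have := NL_nonneg N a
  have : 0 ≤ ε * (N * L N ^ a) := by positivity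
  simpa [S] using this

lemma Lit.sum {ι : Type*} (s : Finset ι) (f : ι → ArithmeticFunction ℝ) (a : ℕ)
    (h : ∀ i ∈ s, Lit (f i) a) : Lit (∑ i ∈ s, f i) a := by
  classical
  induction s using Finset.induction_on with
  | empty => simpa using Lit.zero a
  | insert i s hi ih =>
    rw [Finset.sum_insert hi]
    exact (h i (by simp)).add (ih fun j hj => h j (by simp [hj]))

lemma abs_S_le_S {f h : ArithmeticFunction ℝ} (hfh : ∀ n, 1 ≤ n → |f n| ≤ h n) (N : ℕ) :
    |S f N| ≤ S h N := by
  unfold S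
  refine (Finset.abs_sum_le_sum_abs _ _).trans (Finset.sum_le_sum fun n hn => ?_)
  exact hfh n (Finset.mem_Icc.1 hn).1

lemma Lit.dom {f h : ArithmeticFunction ℝ} {a : ℕ} (hh : Lit h a)
    (hfh : ∀ n, 1 ≤ n → |f n| ≤ h n) : Lit f a :=
  LitF.dom hh fun N _ => (abs_S_le_S hfh N).trans (le_abs_self _)

lemma Lit.bd {f : ArithmeticFunction ℝ} {a : ℕ} (hf : Lit f a) : Bd f a := LitF.bdF hf
lemma Bd.lit {f : ArithmeticFunction ℝ} {a : ℕ} (hf : Bd f a) : Lit f (a + 1) := BdF.litF hf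

lemma S_zero (f : ArithmeticFunction ℝ) : S f 0 = 0 := by simp [S]

/-- Lemma P. -/
lemma sum_div_le {g : ArithmeticFunction ℝ} {b : ℕ} (hg : Bd g b) :
    ∃ C : ℝ, 0 ≤ C ∧ ∀ N : ℕ, 1 ≤ N → ∑ n ∈ Finset.Icc 1 N, g n * (1 / (n:ℝ)) ≤ C * L N ^ (b + 1) := by
  obtain ⟨C, hC, h⟩ := hg
  refine ⟨2 * C, by positivity, fun N hN => ?_⟩
  rw [abel g (fun n => 1 / (n:ℝ)) N]
  have hN0 : (0:ℝ) < N := by exact_mod_cast hN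
  have hL := one_le_L N
  have h1 : S g N * (1 / (N:ℝ)) ≤ C * L N ^ b := by
    have := (le_abs_self _).trans (h N hN)
    rw [mul_one_div, div_le_iff₀ hN0]
    linarith
  have h2 : ∑ n ∈ Finset.range N, -(S g n * (1 / ((n + 1 : ℕ):ℝ) - 1 / (n:ℝ)))
      ≤ ∑ n ∈ Finset.range N, C * L N ^ b * (1 / ((n + 1 : ℕ):ℝ)) := by
    refine Finset.sum_le_sum fun n hn => ?_
    rcases Nat.eq_zero_or_pos n with rfl | hn0
    · simp [S_zero]; have := L_pos N; positivity
    · have hn1 : (0:ℝ) < n := by exact_mod_cast hn0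
      have h3 := (le_abs_self _).trans (h n hn0)
      have h4 : L n ≤ L N := L_mono (Finset.mem_range.1 hn).le
      have h5 := L_pos n
      have h6 : S g n ≤ C * (n * L N ^ b) := h3.trans (by gcongr)
      have e : -(S g n * (1 / ((n + 1 : ℕ):ℝ) - 1 / (n:ℝ))) = S g n * (1 / (n * (n+1:ℝ))) := by
        push_cast; field_simp; ring
      rw [e]
      calc S g n * (1 / (n * (n+1:ℝ))) ≤ C * (n * L N ^ b) * (1 / (n * (n+1:ℝ))) := by gcongr
        _ = _ := by push_cast; field_simp
  have h3 : ∑ n ∈ Finset.range N, (1 / ((n + 1 : ℕ):ℝ)) ≤ L N := by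
    have := harmonic_le_one_add_log N
    unfold L
    refine le_trans (le_of_eq ?_) this
    simp [harmonic]
  rw [← Finset.mul_sum] at h2
  rw [Finset.sum_neg_distrib] at h2
  have hLb : 0 ≤ C * L N ^ b := by have := L_pos N; positivity
  have h4 : C * L N ^ b * ∑ n ∈ Finset.range N, (1 / ((n + 1 : ℕ):ℝ)) ≤ C * L N ^ b * L N := by
    gcongr
  have h5 : C * L N ^ b ≤ C * L N ^ b * L N := by nlinarith
  have : 2 * C * L N ^ (b + 1) = C * L N ^ b * L N + C * L N ^ b * L N := by ring
  linarith

lemma S_mul (f g : ArithmeticFunction ℝ) (N : ℕ) :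
    S (f * g) N = ∑ m ∈ Finset.Icc 1 N, g m * S f (N / m) := by
  have := ArithmeticFunction.sum_Ioc_mul_eq_sum_sum g f N
  have he : ∀ M, Finset.Ioc 0 M = Finset.Icc 1 M := by intro M; ext; simp [Nat.succ_le_iff]
  simp only [he] at this
  rw [mul_comm]; exact this

lemma S_nonneg {g : ArithmeticFunction ℝ} (hg : ∀ n, 0 ≤ g n) (N : ℕ) : 0 ≤ S g N :=
  Finset.sum_nonneg fun n _ => hg n

/-- Lemma E. -/
lemma Lit.mul {h g : ArithmeticFunction ℝ} {a b : ℕ} (hh : Lit h a) (hg : Bd g b)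
    (hg0 : ∀ n, 0 ≤ g n) : Lit (h * g) (a + b + 1) := by
  intro ε hε
  obtain ⟨B, hB, h1⟩ := sum_div_le hg
  obtain ⟨C, hC, h2⟩ := hh (ε / 2 / (B + 1)) (by positivity)
  obtain ⟨D, hD, h3⟩ := (hg.lit.smul C) (ε / 2) (by positivity)
  refine ⟨D, hD, fun N hN => ?_⟩
  have hN0 : (0:ℝ) < N := by exact_mod_cast hN
  have hL := L_pos N
  rw [S_mul]
  have h4 : ∀ m ∈ Finset.Icc 1 N, |g m * S h (N / m)|
      ≤ (ε / 2 / (B + 1)) * (N * L N ^ a) * (g m * (1 / (m:ℝ))) + C * g m := by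
    intro m hm
    obtain ⟨hm1, hm2⟩ := Finset.mem_Icc.1 hm
    have hm0 : (0:ℝ) < m := by exact_mod_cast hm1
    have := h2 (N / m) (Nat.div_pos hm2 hm1)
    have h5 : ((N / m : ℕ):ℝ) ≤ N / m := Nat.cast_div_le
    have h6 : L (N / m) ≤ L N := L_mono (Nat.div_le_self _ _)
    have h7 := L_pos (N / m)
    have h8 := hg0 m
    rw [abs_mul, abs_of_nonneg h8]
    calc g m * |S h (N / m)| ≤ g m * (ε / 2 / (B + 1) * ((N / m : ℕ) * L (N / m) ^ a) + C) := by
          gcongr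
      _ ≤ g m * (ε / 2 / (B + 1) * ((N:ℝ) / m * L N ^ a) + C) := by gcongr
      _ = _ := by field_simp
  refine (Finset.abs_sum_le_sum_abs _ _).trans ((Finset.sum_le_sum h4).trans ?_)
  rw [Finset.sum_add_distrib, ← Finset.mul_sum, ← Finset.mul_sum]
  have h5 := (le_abs_self _).trans (h3 N hN)
  rw [S_smul] at h5
  have h6 := h1 N hN
  have h7 : B * (ε / 2 / (B + 1)) ≤ ε / 2 := by
    rw [← mul_div_assoc, div_le_iff₀ (by positivity)]
    nlinarith
  have h8 : (ε / 2 / (B + 1)) * (N * L N ^ a) * ∑ n ∈ Finset.Icc 1 N, g n * (1 / (n:ℝ))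
      ≤ ε / 2 * (N * L N ^ (a + b + 1)) := by
    calc _ ≤ (ε / 2 / (B + 1)) * (N * L N ^ a) * (B * L N ^ (b + 1)) := by gcongr
      _ = (B * (ε / 2 / (B + 1))) * (N * L N ^ (a + b + 1)) := by ring
      _ ≤ _ := by gcongr
  have h9 : (N:ℝ) * L N ^ (b + 1) ≤ N * L N ^ (a + b + 1) := NL_mono (by omega)
  have h10 : ε / 2 * ((N:ℝ) * L N ^ (b + 1)) ≤ ε / 2 * (N * L N ^ (a + b + 1)) := by gcongr
  unfold S at h5
  linarith

/-- multiplication by log -/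
noncomputable def lg (f : ArithmeticFunction ℝ) : ArithmeticFunction ℝ :=
  ArithmeticFunction.pmul ArithmeticFunction.log f

lemma lg_apply (f : ArithmeticFunction ℝ) (n : ℕ) : lg f n = Real.log n * f n := by
  simp [lg, ArithmeticFunction.log_apply]

lemma logdiff {g : ArithmeticFunction ℝ} {b : ℕ} (hg : Bd g b) :
    BdF (fun N => Real.log N * S g N - S (lg g) N) b := by
  obtain ⟨C, hC, h⟩ := hg
  refine ⟨C, hC, fun N hN => ?_⟩
  have e : S (lg g) N = ∑ n ∈ Finset.Icc 1 N, g n * Real.log n := by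
    unfold S; exact Finset.sum_congr rfl fun n _ => by rw [lg_apply, mul_comm]
  simp only
  rw [e, abel g (fun n => Real.log n)]
  rw [show ∀ x y z : ℝ, x * y - (y * x - z) = z by intros; ring]
  refine (Finset.abs_sum_le_sum_abs _ _).trans ?_
  have h2 : ∀ n ∈ Finset.range N, |S g n * (Real.log ((n + 1 : ℕ):ℝ) - Real.log n)| ≤ C * L N ^ b := by
    intro n hn
    rcases Nat.eq_zero_or_pos n with rfl | hn0
    · simp [S_zero]; have := L_pos N; positivity
    · have hn1 : (0:ℝ) < n := by exact_mod_cast hn0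
      have h3 := h n hn0
      have h4 : L n ≤ L N := L_mono (Finset.mem_range.1 hn).le
      have h5 := L_pos n
      have h6 : |S g n| ≤ C * (n * L N ^ b) := h3.trans (by gcongr)
      have h7 : Real.log ((n + 1 : ℕ):ℝ) - Real.log n ≤ 1 / n := by
        rw [← Real.log_div (by positivity) hn1.ne']
        refine (Real.log_le_sub_one_of_pos (by positivity)).trans (le_of_eq ?_)
        push_cast; field_simp; ring
      have h8 : 0 ≤ Real.log ((n + 1 : ℕ):ℝ) - Real.log n := by
        have : Real.log n ≤ Real.log ((n + 1 : ℕ):ℝ) := Real.log_le_log hn1 (by push_cast; linarith)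
        linarith
      rw [abs_mul, abs_of_nonneg h8]
      calc _ ≤ C * (n * L N ^ b) * (1 / n) := by
            have := L_pos N
            gcongr
        _ = _ := by field_simp
  refine (Finset.sum_le_sum h2).trans (le_of_eq ?_)
  simp; ring

lemma Lit.lg {f : ArithmeticFunction ℝ} {a : ℕ} (hf : Lit f a) : Lit (lg f) (a + 1) := by
  have h1 := (logdiff hf.bd).litF
  have h2 := LitF.log_mul hf
  have := h2.add (h1.const_mul (-1))
  refine this.dom fun N _ => le_of_eq ?_
  congr 1; ring

lemma Lit.mono {f : ArithmeticFunction ℝ} {a b : ℕ} (hf : Lit f a) (h : a ≤ b) : Lit f b :=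
  LitF.mono hf h

lemma lg_add (f g : ArithmeticFunction ℝ) : lg (f + g) = lg f + lg g := by
  ext n; simp [lg_apply, mul_add]

lemma lg_smul (c : ℝ) (g : ArithmeticFunction ℝ) : lg (c • g) = c • lg g := by
  ext n; simp [lg_apply]; ring

lemma lg_sub (f g : ArithmeticFunction ℝ) : lg (f - g) = lg f - lg g := by
  ext n; simp [lg_apply, af_sub_apply, mul_sub]

lemma lg_mul (f g : ArithmeticFunction ℝ) : lg (f * g) = lg f * g + f * lg g := by
  ext n
  rw [lg_apply, ArithmeticFunction.add_apply, ArithmeticFunction.mul_apply,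
    ArithmeticFunction.mul_apply, ArithmeticFunction.mul_apply, Finset.mul_sum,
    ← Finset.sum_add_distrib]
  refine Finset.sum_congr rfl fun x hx => ?_
  obtain ⟨hx1, hx2⟩ := Nat.mem_divisorsAntidiagonal.1 hx
  have : x.1 ≠ 0 := by rintro h; simp [h] at hx1; exact hx2 hx1.symm
  have : x.2 ≠ 0 := by rintro h; simp [h] at hx1; exact hx2 hx1.symm
  rw [lg_apply, lg_apply, ← hx1, Nat.cast_mul, Real.log_mul (by positivity) (by positivity)]
  ring

end VMPNT

namespace VMPNT
open MeasureTheory Set Filter Topology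

noncomputable def z : ArithmeticFunction ℝ := ((ArithmeticFunction.zeta : ArithmeticFunction ℕ) : ArithmeticFunction ℝ)

noncomputable def vM : ArithmeticFunction ℝ := ArithmeticFunction.vonMangoldt

lemma vM_mul_z : vM * z = ArithmeticFunction.log := ArithmeticFunction.vonMangoldt_mul_zeta

lemma z_apply {n : ℕ} (hn : 1 ≤ n) : z n = 1 := by
  have : n ≠ 0 := by omega
  simp [z, this]

lemma z_nonneg (n : ℕ) : 0 ≤ z n := by
  rcases Nat.eq_zero_or_pos n with rfl | h
  · simp
  · simp [z_apply h]

lemma vM_nonneg (n : ℕ) : 0 ≤ vM n := ArithmeticFunction.vonMangoldt_nonneg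

lemma mul_nonneg' {f g : ArithmeticFunction ℝ} (hf : ∀ n, 0 ≤ f n) (hg : ∀ n, 0 ≤ g n) (n : ℕ) :
    0 ≤ (f * g) n := by
  rw [ArithmeticFunction.mul_apply]
  exact Finset.sum_nonneg fun x _ => mul_nonneg (hf _) (hg _)

noncomputable def tau (a : ℕ) : ArithmeticFunction ℝ := z ^ (a + 1)

lemma tau_nonneg (a n : ℕ) : 0 ≤ tau a n := by
  induction a generalizing n with
  | zero => simpa [tau] using z_nonneg n
  | succ a ih =>
    unfold tau; rw [pow_succ]
    exact mul_nonneg' ih z_nonneg n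

lemma S_z (N : ℕ) : S z N = N := by
  unfold S
  rw [Finset.sum_congr rfl fun n hn => z_apply (Finset.mem_Icc.1 hn).1]
  simp

lemma lg_z : lg z = ArithmeticFunction.log := by
  ext n
  rcases Nat.eq_zero_or_pos n with rfl | h
  · simp
  · simp [lg_apply, z_apply h, ArithmeticFunction.log_apply]

lemma bd_tau (a : ℕ) : Bd (tau a) a := by
  induction a with
  | zero =>
    refine ⟨1, one_pos.le, fun N hN => ?_⟩
    simp [tau, S_z]
  | succ a ih =>
    obtain ⟨C, hC, h⟩ := sum_div_le ih
    refine ⟨C, hC, fun N hN => ?_⟩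
    rw [abs_of_nonneg (S_nonneg (tau_nonneg _) _)]
    have : tau (a + 1) = z * tau a := by unfold tau; rw [pow_succ']
    rw [this, S_mul]
    have h1 : ∑ m ∈ Finset.Icc 1 N, tau a m * S z (N / m)
        ≤ ∑ m ∈ Finset.Icc 1 N, N * (tau a m * (1 / (m:ℝ))) := by
      refine Finset.sum_le_sum fun m hm => ?_
      have h5 : ((N / m : ℕ):ℝ) ≤ N / m := Nat.cast_div_le
      rw [S_z]
      have := tau_nonneg a m
      calc _ ≤ tau a m * ((N:ℝ) / m) := by gcongr
        _ = _ := by ring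
    refine h1.trans ?_
    rw [← Finset.mul_sum]
    calc _ ≤ (N:ℝ) * (C * L N ^ (a + 1)) := by
          have := h N hN
          gcongr
      _ = _ := by ring

lemma tau_mul (a b : ℕ) : tau a * tau b = tau (a + b + 1) := by
  unfold tau; rw [← pow_add]; congr 1; omega

lemma lg_tau (a : ℕ) : lg (tau a) = ((a : ℝ) + 1) • (vM * tau a) := by
  induction a with
  | zero => simp [tau, lg_z, vM_mul_z]
  | succ a ih =>
    have : tau (a + 1) = tau a * z := by unfold tau; rw [pow_succ]
    rw [this, lg_mul, ih, lg_z, ← vM_mul_z, smul_mul_assoc]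
    have e : tau a * (vM * z) = vM * (tau a * z) := by ring
    rw [e, mul_assoc]
    push_cast
    rw [add_smul, add_smul, add_smul]; simp

lemma lit_vM : Lit (vM - z) 0 := by
  intro ε hε
  obtain ⟨C, h⟩ := pnt ε hε
  refine ⟨|C|, abs_nonneg _, fun N hN => ?_⟩
  rw [S_sub, S_z]
  have := h N hN
  have := le_abs_self C
  unfold S vM
  simp only [pow_zero, mul_one]
  linarith

lemma lit_lg_tau (a : ℕ) : Lit (lg (tau a) - ((a:ℝ) + 1) • tau (a + 1)) (a + 1) := by
  have h := (lit_vM.mul (bd_tau a) (tau_nonneg a)).smul ((a:ℝ) + 1)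
  have e : ((a:ℝ) + 1) • ((vM - z) * tau a) = lg (tau a) - ((a:ℝ) + 1) • tau (a + 1) := by
    have : tau (a + 1) = z * tau a := by unfold tau; rw [pow_succ']
    rw [lg_tau, this, sub_mul, smul_sub]
  rw [e] at h
  simpa using h

def Asy (f : ArithmeticFunction ℝ) (c : ℝ) (a : ℕ) : Prop := Lit (f - c • tau a) a

lemma Asy.bd {f : ArithmeticFunction ℝ} {c : ℝ} {a : ℕ} (h : Asy f c a) : Bd f a := by
  have h1 := BdF.add (LitF.bdF h) ((bd_tau a).const_mul c)
  refine h1.dom fun N _ => le_of_eq ?_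
  congr 1
  rw [S_sub, S_smul]; ring

lemma Asy.add {f g : ArithmeticFunction ℝ} {c d : ℝ} {a : ℕ} (hf : Asy f c a) (hg : Asy g d a) :
    Asy (f + g) (c + d) a := by
  have := Lit.add hf hg
  unfold Asy
  convert this using 1
  rw [add_smul]; abel

lemma Asy.smul {f : ArithmeticFunction ℝ} {c : ℝ} {a : ℕ} (hf : Asy f c a) (d : ℝ) :
    Asy (d • f) (d * c) a := by
  have := Lit.smul hf d
  unfold Asy
  convert this using 1
  rw [smul_sub, smul_smul]

lemma Asy.zero (a : ℕ) : Asy 0 0 a := by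
  unfold Asy; simpa using Lit.zero a

lemma Asy.sum {ι : Type*} (s : Finset ι) (f : ι → ArithmeticFunction ℝ) (c : ι → ℝ) (a : ℕ)
    (h : ∀ i ∈ s, Asy (f i) (c i) a) : Asy (∑ i ∈ s, f i) (∑ i ∈ s, c i) a := by
  classical
  induction s using Finset.induction_on with
  | empty => simpa using Asy.zero a
  | insert i s hi ih =>
    rw [Finset.sum_insert hi, Finset.sum_insert hi]
    exact (h i (by simp)).add (ih fun j hj => h j (by simp [hj]))

lemma Asy.of_lit {f g : ArithmeticFunction ℝ} {c : ℝ} {a : ℕ} (hg : Asy g c a)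
    (h : Lit (f - g) a) : Asy f c a := by
  have := Lit.add h hg
  unfold Asy
  convert this using 1
  abel

lemma Asy.mul {f g : ArithmeticFunction ℝ} {c d : ℝ} {a b : ℕ} (hf : Asy f c a) (hg : Asy g d b)
    (hg0 : ∀ n, 0 ≤ g n) : Asy (f * g) (c * d) (a + b + 1) := by
  have h1 := Lit.mul hf hg.bd hg0
  have h2 := (Lit.mul hg (bd_tau a) (tau_nonneg a)).smul c
  have h2 := h2.mono (show b + a + 1 ≤ a + b + 1 by omega)
  have := h1.add h2
  unfold Asy
  convert this using 1
  rw [← tau_mul, sub_mul, sub_mul, smul_sub, smul_mul_assoc, smul_mul_assoc, smul_smul,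
    mul_comm g, mul_comm (tau b)]
  abel

lemma Asy.lg {f : ArithmeticFunction ℝ} {c : ℝ} {a : ℕ} (hf : Asy f c a) :
    Asy (lg f) (c * (a + 1)) (a + 1) := by
  have h1 := Lit.lg hf
  have h2 := (lit_lg_tau a).smul c
  have := h1.add h2
  unfold Asy
  convert this using 1
  rw [lg_sub, lg_smul, smul_sub, smul_smul]; abel

noncomputable def lgp (b : ℕ) (f : ArithmeticFunction ℝ) : ArithmeticFunction ℝ := VMPNT.lg^[b] f

lemma lgp_succ (b : ℕ) (f : ArithmeticFunction ℝ) : lgp (b + 1) f = VMPNT.lg (lgp b f) := by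
  unfold lgp; rw [Function.iterate_succ_apply']

lemma lgp_apply (b : ℕ) (f : ArithmeticFunction ℝ) (n : ℕ) : lgp b f n = Real.log n ^ b * f n := by
  induction b with
  | zero => simp [lgp]
  | succ b ih => rw [lgp_succ, lg_apply, ih]; ring

lemma asy_vM : Asy vM 1 0 := by
  have := lit_vM
  unfold Asy
  simpa [tau] using this

lemma asy_lgp_vM (b : ℕ) : Asy (lgp b vM) (b.factorial : ℝ) b := by
  induction b with
  | zero => simpa [lgp] using asy_vM
  | succ b ih =>
    rw [lgp_succ]
    have := ih.lg
    convert this using 1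
    rw [Nat.factorial_succ]; push_cast; ring

/-! Limits. -/

lemma LitF.tendsto {u : ℕ → ℝ} {a : ℕ} (hu : LitF u a) :
    Tendsto (fun N : ℕ => u N / (N * Real.log N ^ a)) atTop (𝓝 0) := by
  rw [Metric.tendsto_atTop]
  intro ε hε
  obtain ⟨C, hC, h⟩ := hu (ε / 4 / 2 ^ a) (by positivity)
  have hlog : ∀ᶠ N : ℕ in atTop, 1 ≤ Real.log N :=
    (Real.tendsto_log_atTop.comp tendsto_natCast_atTop_atTop).eventually_ge_atTop 1
  have hbig : ∀ᶠ N : ℕ in atTop, C / (ε / 4) ≤ (N:ℝ) :=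
    tendsto_natCast_atTop_atTop.eventually_ge_atTop _
  obtain ⟨M, hM⟩ := eventually_atTop.1 ((hlog.and hbig).and (eventually_ge_atTop 1))
  refine ⟨M, fun N hN => ?_⟩
  obtain ⟨⟨h1, h2⟩, h3⟩ := hM N hN
  have hN0 : (0:ℝ) < N := by exact_mod_cast h3
  have hl : 0 < Real.log N := by linarith
  rw [Real.dist_eq, sub_zero, abs_div, abs_of_pos (show 0 < (N:ℝ) * Real.log N ^ a by positivity),
    div_lt_iff₀ (by positivity)]
  have h4 := h N h3
  have h5 : L N ≤ 2 * Real.log N := by unfold L; linarith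
  have h6 := L_pos N
  have h7 : ε / 4 / 2 ^ a * (N * L N ^ a) ≤ ε / 4 * (N * Real.log N ^ a) := by
    calc _ ≤ ε / 4 / 2 ^ a * (N * (2 * Real.log N) ^ a) := by gcongr
      _ = _ := by rw [mul_pow]; field_simp
  have h8 : C ≤ ε / 4 * (N * Real.log N ^ a) := by
    rw [div_le_iff₀ (by positivity)] at h2
    have := one_le_pow₀ h1 (n := a)
    have : (N:ℝ) ≤ N * Real.log N ^ a := by nlinarith
    nlinarith
  have : 0 < ε * (N * Real.log N ^ a) := by positivity
  linarith

lemma tendsto_tau (a : ℕ) :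
    Tendsto (fun N : ℕ => S (tau a) N / (N * Real.log N ^ a)) atTop (𝓝 (1 / a.factorial)) := by
  induction a with
  | zero =>
    refine Tendsto.congr' ?_ (tendsto_const_nhds)
    filter_upwards [eventually_ge_atTop 1] with N hN
    have hN0 : (0:ℝ) < N := by exact_mod_cast hN
    simp [tau, S_z, hN0.ne']
  | succ a ih =>
    have h1 := ((logdiff (bd_tau a)).litF).tendsto
    have h2 := (lit_lg_tau a).tendsto
    have h3 := ((ih.sub h1).sub h2).mul_const (1 / ((a:ℝ) + 1))
    have e : (1 / (a.factorial : ℝ) - 0 - 0) * (1 / ((a:ℝ) + 1)) = 1 / ((a+1).factorial : ℝ) := by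
      rw [Nat.factorial_succ]; push_cast; field_simp; ring
    rw [e] at h3
    refine h3.congr' ?_
    have hlog : ∀ᶠ N : ℕ in atTop, 1 ≤ Real.log N :=
      (Real.tendsto_log_atTop.comp tendsto_natCast_atTop_atTop).eventually_ge_atTop 1
    filter_upwards [eventually_ge_atTop 1, hlog] with N hN hl
    have hN0 : (0:ℝ) < N := by exact_mod_cast hN
    have hl : 0 < Real.log N := by linarith
    rw [S_sub, S_smul]
    field_simp
    ring

lemma Asy.tendsto {f : ArithmeticFunction ℝ} {c : ℝ} {a : ℕ} (hf : Asy f c a) :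
    Tendsto (fun N : ℕ => S f N / (N * Real.log N ^ a)) atTop (𝓝 (c / a.factorial)) := by
  have h1 := LitF.tendsto hf
  have h2 := (tendsto_tau a).const_mul c
  have h3 := h1.add h2
  rw [zero_add, mul_one_div] at h3
  refine h3.congr fun N => ?_
  rw [S_sub, S_smul]; ring

lemma Asy.tendsto_real {f : ArithmeticFunction ℝ} {c : ℝ} {a : ℕ} (hf : Asy f c a) :
    Tendsto (fun X : ℝ => S f ⌊X⌋₊ / (X * Real.log X ^ a)) atTop (𝓝 (c / a.factorial)) := by
  have h1 := hf.tendsto.comp (tendsto_nat_floor_atTop (α := ℝ))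
  have h2 := tendsto_nat_floor_div_atTop (R := ℝ)
  have h3 : Tendsto (fun X : ℝ => Real.log ((⌊X⌋₊ : ℝ) / X)) atTop (𝓝 0) := by
    have := (Real.continuousAt_log (one_ne_zero)).tendsto.comp h2
    rw [Real.log_one] at this; exact this
  have h4 : Tendsto (fun X : ℝ => 1 + Real.log ((⌊X⌋₊ : ℝ) / X) / Real.log X) atTop (𝓝 1) := by
    have := (h3.div_atTop Real.tendsto_log_atTop).const_add 1
    simpa using this
  have h5 := (h1.mul h2).mul (h4.pow a)
  simp only [one_pow, mul_one] at h5
  refine h5.congr' ?_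
  filter_upwards [eventually_ge_atTop 3] with X hX
  have hX0 : 0 < X := by linarith
  have hf3 : 3 ≤ ⌊X⌋₊ := Nat.le_floor (by exact_mod_cast hX)
  have hf3' : (3:ℝ) ≤ (⌊X⌋₊:ℝ) := by exact_mod_cast hf3
  have hl1 : 0 < Real.log X := Real.log_pos (by linarith)
  have hl2 : 0 < Real.log (⌊X⌋₊:ℝ) := Real.log_pos (by linarith)
  have hfp : 0 < (⌊X⌋₊:ℝ) := by linarith
  have e : 1 + Real.log ((⌊X⌋₊ : ℝ) / X) / Real.log X = Real.log (⌊X⌋₊:ℝ) / Real.log X := by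
    rw [Real.log_div hfp.ne' hX0.ne']; field_simp; ring
  simp only [Function.comp]
  rw [e, div_pow]
  field_simp

end VMPNT

namespace VMPNT
open MeasureTheory Set Filter Topology

noncomputable def mu : ArithmeticFunction ℝ :=
  ((ArithmeticFunction.moebius : ArithmeticFunction ℤ) : ArithmeticFunction ℝ)

lemma mu_apply (n : ℕ) : mu n = (ArithmeticFunction.moebius n : ℝ) := by simp [mu]

lemma mu_mul_z : mu * z = 1 := ArithmeticFunction.coe_moebius_mul_coe_zeta

noncomputable def vJ (j : ℕ) : ArithmeticFunction ℝ := mu * lgp j z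

lemma lg_mu : lg mu = -(vM * mu) := by
  have h := lg_mul mu z
  have h1 : lg (mu * z) = 0 := by
    rw [mu_mul_z]; ext n
    rw [lg_apply]
    by_cases hn : n = 1
    · simp [hn]
    · simp [ArithmeticFunction.one_apply_ne hn]
  rw [h1, lg_z, ← vM_mul_z] at h
  have h2 : lg mu * z = -(mu * (vM * z)) := eq_neg_of_add_eq_zero_left h.symm
  calc lg mu = lg mu * (mu * z) := by rw [mu_mul_z, mul_one]
    _ = (lg mu * z) * mu := by ring
    _ = -(vM * mu) * (mu * z) := by rw [h2]; ring
    _ = _ := by rw [mu_mul_z, mul_one]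

lemma vJ_zero : vJ 0 = 1 := by
  unfold vJ; simp [lgp, mu_mul_z]

lemma vJ_succ (j : ℕ) : vJ (j + 1) = lg (vJ j) + vM * vJ j := by
  unfold vJ
  rw [lg_mul, lg_mu, lgp_succ]; ring

lemma vJ_apply (j n : ℕ) : vJ j n = vmJ j n := by
  unfold vJ vmJ
  rw [ArithmeticFunction.mul_apply, Nat.sum_divisorsAntidiagonal (fun d e => mu d * lgp j z e)]
  refine Finset.sum_congr rfl fun d hd => ?_
  obtain ⟨h1, h2⟩ := Nat.mem_divisors.1 hd
  have hd0 : d ≠ 0 := by rintro rfl; exact h2 (zero_dvd_iff.1 h1)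
  have : 1 ≤ n / d := Nat.div_pos (Nat.le_of_dvd (Nat.pos_of_ne_zero h2) h1) (Nat.pos_of_ne_zero hd0)
  rw [lgp_apply, z_apply this, mu_apply, Nat.cast_div h1 (by exact_mod_cast hd0)]
  ring

lemma lg_nonneg {f : ArithmeticFunction ℝ} (hf : ∀ n, 0 ≤ f n) (n : ℕ) : 0 ≤ lg f n := by
  rw [lg_apply]; exact mul_nonneg (Real.log_natCast_nonneg n) (hf n)

lemma vJ_nonneg (j n : ℕ) : 0 ≤ vJ j n := by
  induction j generalizing n with
  | zero =>
    rw [vJ_zero]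
    by_cases hn : n = 1
    · simp [hn]
    · simp [ArithmeticFunction.one_apply_ne hn]
  | succ j ih =>
    rw [vJ_succ, ArithmeticFunction.add_apply]
    exact add_nonneg (lg_nonneg ih n) (mul_nonneg' vM_nonneg ih n)

lemma vJ_one (j : ℕ) (hj : 1 ≤ j) : vJ j 1 = 0 := by
  rw [vJ_apply]; simp [vmJ]; omega

lemma vJ_omega (j n : ℕ) (hn : n ≠ 0) (h : j < n.primeFactors.card) : vJ j n = 0 := by
  induction j generalizing n with
  | zero =>
    rw [vJ_zero]
    apply ArithmeticFunction.one_apply_ne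
    rintro rfl; simp at h
  | succ j ih =>
    rw [vJ_succ, ArithmeticFunction.add_apply, lg_apply, ih n hn (by omega), mul_zero, zero_add,
      ArithmeticFunction.mul_apply]
    refine Finset.sum_eq_zero fun x hx => ?_
    obtain ⟨h1, h2⟩ := Nat.mem_divisorsAntidiagonal.1 hx
    have hx1 : x.1 ≠ 0 := by rintro h; simp [h] at h1; exact h2 h1.symm
    have hx2 : x.2 ≠ 0 := by rintro h; simp [h] at h1; exact h2 h1.symm
    by_cases hq : IsPrimePow x.1
    · rw [ih x.2 hx2, mul_zero]
      have h3 : x.1.primeFactors.card = 1 := by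
        rw [← ArithmeticFunction.cardDistinctFactors_eq_one_iff] at hq
        rw [← hq]; rfl
      have h4 : n.primeFactors = x.1.primeFactors ∪ x.2.primeFactors := by
        rw [← h1, Nat.primeFactors_mul hx1 hx2]
      have := Finset.card_union_le x.1.primeFactors x.2.primeFactors
      rw [← h4] at this
      omega
    · have : vM x.1 = 0 := ArithmeticFunction.vonMangoldt_eq_zero_iff.2 hq
      rw [this, zero_mul]

/-- The shifted sum. -/
noncomputable def Pk (k : ℕ) (r : ℝ) (m : ℕ) : ℝ :=
  ∑ d ∈ m.divisors, (ArithmeticFunction.moebius d : ℝ) * (r + Real.log ((m:ℝ) / d)) ^ k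

lemma Pk_expand (k : ℕ) (r : ℝ) (m : ℕ) :
    Pk k r m = ∑ b ∈ Finset.range (k + 1), (k.choose b : ℝ) * r ^ b * vJ (k - b) m := by
  unfold Pk
  simp_rw [vJ_apply, vmJ, add_pow, Finset.mul_sum]
  rw [Finset.sum_comm]
  refine Finset.sum_congr rfl fun b _ => Finset.sum_congr rfl fun d _ => ?_
  ring

noncomputable def Gk (k : ℕ) (r : ℝ) (m : ℕ) : ℝ :=
  ∑ b ∈ Finset.Icc 1 k, (k.choose b : ℝ) * r ^ b * vJ (k - b) m

lemma Pk_eq (k : ℕ) (r : ℝ) (m : ℕ) : Pk k r m = vJ k m + Gk k r m := by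
  rw [Pk_expand, Finset.range_eq_Ico, Finset.sum_eq_sum_Ico_succ_bot (by omega)]
  unfold Gk
  have : Finset.Ico (0 + 1) (k + 1) = Finset.Icc 1 k := by ext; simp
  rw [this]; simp

lemma Gk_nonneg (k : ℕ) {r : ℝ} (hr : 0 ≤ r) (m : ℕ) : 0 ≤ Gk k r m :=
  Finset.sum_nonneg fun b _ => mul_nonneg (by positivity) (vJ_nonneg _ _)

lemma Gk_mono (k : ℕ) {r s : ℝ} (hr : 0 ≤ r) (hrs : r ≤ s) (m : ℕ) : Gk k r m ≤ Gk k s m := by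
  refine Finset.sum_le_sum fun b _ => ?_
  have := vJ_nonneg (k - b) m
  gcongr

lemma Gk_zero (k m : ℕ) : Gk k 0 m = 0 := by
  refine Finset.sum_eq_zero fun b hb => ?_
  have : b ≠ 0 := by have := (Finset.mem_Icc.1 hb).1; omega
  simp [this]

lemma vJ_dvd {p e m k : ℕ} (hp : p.Prime) (hm : m ≠ 0) (hpm : p ∣ m) :
    vJ k (p ^ e * m) = Pk k (Real.log ((p ^ e : ℕ) : ℝ)) m := by
  rw [vJ_apply]
  unfold vmJ Pk
  have hpe : p ^ e ≠ 0 := pow_ne_zero _ hp.ne_zero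
  have hsub : m.divisors ⊆ (p ^ e * m).divisors := by
    apply Nat.divisors_subset_of_dvd (mul_ne_zero hpe hm) (dvd_mul_left _ _)
  rw [← Finset.sum_subset hsub]
  · refine Finset.sum_congr rfl fun d hd => ?_
    have hd0 : d ≠ 0 := by rintro rfl; simp at hd
    rw [← Real.log_mul (by exact_mod_cast hpe) (by positivity)]
    push_cast; rw [mul_div_assoc]
  · intro d hd hd2
    have : ¬ Squarefree d := by
      intro hsq
      apply hd2
      rw [Nat.mem_divisors]
      refine ⟨?_, hm⟩
      have h1 : d ∣ m ^ (e + 1) := by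
        rw [pow_succ]
        exact (Nat.mem_divisors.1 hd).1.trans (mul_dvd_mul (pow_dvd_pow_of_dvd hpm e) dvd_rfl)
      exact (hsq.dvd_pow_iff_dvd (by omega)).1 h1
    rw [ArithmeticFunction.moebius_eq_zero_of_not_squarefree this]; simp

lemma vJ_not_dvd {p e m k : ℕ} (hp : p.Prime) (hm : m ≠ 0) (hpm : ¬ p ∣ m) :
    vJ k (p ^ (e + 1) * m) = Pk k (Real.log ((p ^ (e + 1) : ℕ) : ℝ)) m
      - Pk k (Real.log ((p ^ e : ℕ) : ℝ)) m := by
  classical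
  rw [vJ_apply]
  unfold vmJ Pk
  have hpe : p ^ e ≠ 0 := pow_ne_zero _ hp.ne_zero
  have hpe1 : p ^ (e + 1) ≠ 0 := pow_ne_zero _ hp.ne_zero
  have hp0 : (p:ℝ) ≠ 0 := by exact_mod_cast hp.ne_zero
  have hdisj : Disjoint m.divisors (m.divisors.image (fun d => p * d)) := by
    rw [Finset.disjoint_left]
    intro d hd hd2
    obtain ⟨d', _, rfl⟩ := Finset.mem_image.1 hd2
    exact hpm ((dvd_mul_right _ _).trans (Nat.mem_divisors.1 hd).1)
  have hsub : m.divisors ∪ m.divisors.image (fun d => p * d) ⊆ (p ^ (e + 1) * m).divisors := by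
    intro d hd
    rw [Nat.mem_divisors]
    refine ⟨?_, mul_ne_zero hpe1 hm⟩
    rcases Finset.mem_union.1 hd with hd | hd
    · exact (Nat.mem_divisors.1 hd).1.trans (dvd_mul_left _ _)
    · obtain ⟨d', hd', rfl⟩ := Finset.mem_image.1 hd
      exact mul_dvd_mul (dvd_pow_self p (by omega)) (Nat.mem_divisors.1 hd').1
  rw [← Finset.sum_subset hsub, Finset.sum_union hdisj, Finset.sum_image, sub_eq_add_neg,
    ← Finset.sum_neg_distrib]
  · congr 1
    · refine Finset.sum_congr rfl fun d hd => ?_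
      have hd0 : d ≠ 0 := by rintro rfl; simp at hd
      rw [← Real.log_mul (by exact_mod_cast hpe1) (by positivity)]
      push_cast; rw [mul_div_assoc]
    · refine Finset.sum_congr rfl fun d hd => ?_
      have hd0 : d ≠ 0 := by rintro rfl; simp at hd
      have hpd : ¬ p ∣ d := fun h => hpm (h.trans (Nat.mem_divisors.1 hd).1)
      have hmu : ArithmeticFunction.moebius (p * d) = - ArithmeticFunction.moebius d := by
        rw [ArithmeticFunction.isMultiplicative_moebius.map_mul_of_coprime
          ((Nat.Prime.coprime_iff_not_dvd hp).2 hpd), ArithmeticFunction.moebius_apply_prime hp]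
        ring
      rw [hmu, ← Real.log_mul (by exact_mod_cast hpe) (by positivity)]
      have : ((p ^ (e + 1) * m : ℕ):ℝ) / ((p * d : ℕ):ℝ) = ((p ^ e : ℕ):ℝ) * ((m:ℝ) / d) := by
        push_cast; field_simp; ring
      rw [this]; push_cast; ring
  · intro a _ b _ h
    exact Nat.eq_of_mul_eq_mul_left hp.pos h
  · intro d hd hd2
    have : ¬ Squarefree d := by
      intro hsq
      apply hd2
      have h1 := (Nat.mem_divisors.1 hd).1
      rw [Finset.mem_union]
      by_cases hpd : p ∣ d
      · right
        obtain ⟨c, rfl⟩ := hpd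
        rw [Finset.mem_image]
        refine ⟨c, ?_, rfl⟩
        rw [Nat.mem_divisors]
        refine ⟨?_, hm⟩
        have hcop : Nat.Coprime p c := Nat.coprime_of_squarefree_mul hsq
        exact (Nat.Coprime.pow_right (e + 1) hcop.symm).dvd_of_dvd_mul_left
          ((dvd_mul_left _ _).trans h1)
      · left
        rw [Nat.mem_divisors]
        refine ⟨?_, hm⟩
        exact (Nat.Coprime.pow_right (e + 1) ((Nat.Prime.coprime_iff_not_dvd hp).2 hpd).symm).dvd_of_dvd_mul_left h1
    rw [ArithmeticFunction.moebius_eq_zero_of_not_squarefree this]; simp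

/-- Key pointwise estimate. -/
lemma vJ_key {q m : ℕ} (k : ℕ) (hq : IsPrimePow q) (hm : m ≠ 0) :
    |vJ k (q * m) - Gk k (Real.log q) m|
      ≤ (if q.Coprime m then 0 else vJ k m) + (if q.Prime then 0 else Gk k (Real.log q) m) := by
  obtain ⟨p, e, hp, he, rfl⟩ := (isPrimePow_nat_iff _).1 hq
  have hlog : 0 ≤ Real.log ((p ^ e : ℕ) : ℝ) := Real.log_natCast_nonneg _
  have hG := Gk_nonneg k hlog m
  have hV := vJ_nonneg k m
  by_cases hpm : p ∣ m
  · rw [vJ_dvd hp hm hpm, Pk_eq]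
    have : ¬ (p ^ e).Coprime m := by
      rw [Nat.coprime_pow_left_iff he, Nat.Prime.coprime_iff_not_dvd hp]; simpa using hpm
    rw [if_neg this, add_sub_cancel_right, abs_of_nonneg hV]
    split_ifs <;> linarith
  · have : (p ^ e).Coprime m := by
      rw [Nat.coprime_pow_left_iff he, Nat.Prime.coprime_iff_not_dvd hp]; exact hpm
    rw [if_pos this, zero_add]
    obtain ⟨f, rfl⟩ : ∃ f, e = f + 1 := ⟨e - 1, by omega⟩
    rw [vJ_not_dvd hp hm hpm, Pk_eq, Pk_eq]
    have hlog2 : 0 ≤ Real.log ((p ^ f : ℕ) : ℝ) := Real.log_natCast_nonneg _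
    have hmono : Real.log ((p ^ f : ℕ) : ℝ) ≤ Real.log ((p ^ (f + 1) : ℕ) : ℝ) := by
      apply Real.log_le_log
      · exact_mod_cast pow_pos hp.pos f
      · exact_mod_cast Nat.pow_le_pow_right hp.pos (by omega)
    have e1 : ∀ x y w : ℝ, x + y - (x + w) - y = - w := by intros; ring
    rw [e1, abs_neg, abs_of_nonneg (Gk_nonneg k hlog2 m)]
    split_ifs with h
    · have : f = 0 := by
        have := (Nat.Prime.eq_one_of_pow h); omega
      subst this
      simp [Gk_zero]
    · exact Gk_mono k hlog2 hmono m

end VMPNT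

namespace VMPNT
open MeasureTheory Set Filter Topology

/-- nonprime part of von Mangoldt -/
noncomputable def hN : ArithmeticFunction ℝ :=
  ⟨fun n => if n.Prime then 0 else vM n, by simp⟩

lemma hN_apply (n : ℕ) : hN n = if n.Prime then 0 else vM n := rfl

lemma lit_hN : Lit hN 0 := by
  intro ε hε
  set δ : ℝ := ε / 8 with hδ
  have hδ0 : 0 < δ := by positivity
  set A := |Real.log δ| with hA
  refine ⟨4 * A ^ 2 / ε * 2, by positivity, fun N hN1 => ?_⟩
  have hN0 : (0:ℝ) < N := by exact_mod_cast hN1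
  have he : Finset.Ioc 0 N = Finset.Icc 1 N := by ext; simp [Nat.succ_le_iff]
  have h1 : S hN N = Chebyshev.psi N - Chebyshev.theta N := by
    rw [Chebyshev.psi_sub_theta_eq_sum_not_prime, Nat.floor_natCast, he, Finset.sum_filter]
    unfold S
    refine Finset.sum_congr rfl fun n _ => ?_
    rw [hN_apply]; unfold vM; split_ifs <;> simp_all
  rw [h1]
  refine (Chebyshev.abs_psi_sub_theta_le_sqrt_mul_log (by exact_mod_cast hN1)).trans ?_
  set s := Real.sqrt N with hs
  have hs0 : 0 < s := Real.sqrt_pos.2 hN0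
  have hss : (N:ℝ) = s * s := (Real.mul_self_sqrt hN0.le).symm
  have h2 : Real.log N ≤ 2 * (δ * s + A) := by
    rw [hss, Real.log_mul hs0.ne' hs0.ne']
    have h1 := Real.log_le_sub_one_of_pos (show 0 < δ * s by positivity)
    rw [Real.log_mul hδ0.ne' hs0.ne'] at h1
    have := neg_abs_le (Real.log δ)
    linarith
  have h3 : 2 * s * Real.log N ≤ 2 * s * (2 * (δ * s + A)) := by gcongr
  refine h3.trans ?_
  simp only [pow_zero, mul_one]
  rw [hss]
  have h4 : 4 * s * A ≤ ε / 2 * (s * s) + 4 * A ^ 2 / ε * 2 := by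
    have : ε / 2 * (s * s) + 4 * A ^ 2 / ε * 2 - 4 * s * A = (ε * s - 4 * A) ^ 2 / (2 * ε) := by
      field_simp; ring
    have h5 : 0 ≤ (ε * s - 4 * A) ^ 2 / (2 * ε) := by positivity
    linarith
  have : 2 * s * (2 * (δ * s + A)) = ε / 2 * (s * s) + 4 * s * A := by rw [hδ]; ring
  linarith

lemma lit_lgp {f : ArithmeticFunction ℝ} (hf : Lit f 0) (b : ℕ) : Lit (lgp b f) b := by
  induction b with
  | zero => exact hf
  | succ b ih => rw [lgp_succ]; exact ih.lg

noncomputable def fJ (j k : ℕ) : ArithmeticFunction ℝ := (vJ j).pmul (vJ k)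

lemma fJ_apply (j k n : ℕ) : fJ j k n = vJ j n * vJ k n := by simp [fJ]

lemma fJ_nonneg (j k n : ℕ) : 0 ≤ fJ j k n := by
  rw [fJ_apply]; exact mul_nonneg (vJ_nonneg _ _) (vJ_nonneg _ _)

lemma fJ_zero (j : ℕ) (hj : 1 ≤ j) : fJ j 0 = 0 := by
  ext n
  rw [fJ_apply, vJ_zero]
  by_cases hn : n = 1
  · simp [hn, vJ_one j hj]
  · simp [ArithmeticFunction.one_apply_ne hn]

/-- The non-coprime error term. -/
noncomputable def E1 (j k : ℕ) : ArithmeticFunction ℝ :=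
  ⟨fun n => ∑ x ∈ n.divisorsAntidiagonal, if x.1.Coprime x.2 then 0 else vM x.1 * fJ j k x.2, by simp⟩

lemma E1_apply (j k n : ℕ) : E1 j k n =
    ∑ x ∈ n.divisorsAntidiagonal, if x.1.Coprime x.2 then 0 else vM x.1 * fJ j k x.2 := rfl

lemma sum_antidiag (F : ℕ → ℕ → ℝ) (N : ℕ) :
    ∑ n ∈ Finset.Icc 1 N, ∑ x ∈ n.divisorsAntidiagonal, F x.1 x.2
      = ∑ m ∈ Finset.Icc 1 N, ∑ q ∈ Finset.Icc 1 (N / m), F q m := by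
  rw [Finset.sum_sigma', Finset.sum_sigma']
  refine Finset.sum_bij' (fun a _ => ⟨a.2.2, a.2.1⟩) (fun b _ => ⟨b.2 * b.1, (b.2, b.1)⟩) ?_ ?_ ?_ ?_ ?_
  · rintro ⟨n, q, m⟩ h
    simp only [Finset.mem_sigma, Finset.mem_Icc, Nat.mem_divisorsAntidiagonal] at h ⊢
    obtain ⟨⟨h1, h2⟩, h3, h4⟩ := h
    have hq : 1 ≤ q := by rcases Nat.eq_zero_or_pos q with rfl | h; simp at h3; omega; exact h
    have hm : 1 ≤ m := by rcases Nat.eq_zero_or_pos m with rfl | h; simp at h3; omega; exact h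
    refine ⟨⟨hm, ?_⟩, hq, ?_⟩
    · nlinarith
    · rw [Nat.le_div_iff_mul_le hm]; omega
  · rintro ⟨m, q⟩ h
    simp only [Finset.mem_sigma, Finset.mem_Icc, Nat.mem_divisorsAntidiagonal] at h ⊢
    obtain ⟨⟨h1, h2⟩, h3, h4⟩ := h
    rw [Nat.le_div_iff_mul_le h1] at h4
    have : 0 < q * m := Nat.mul_pos h3 h1
    exact ⟨⟨this, h4⟩, trivial, this.ne'⟩
  · rintro ⟨n, q, m⟩ h
    simp only [Finset.mem_sigma, Finset.mem_Icc, Nat.mem_divisorsAntidiagonal] at h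
    obtain ⟨_, rfl, _⟩ := h
    rfl
  · rintro ⟨m, q⟩ h; rfl
  · rintro ⟨n, q, m⟩ h; rfl

lemma sum_vM_p (p Y : ℕ) (hp : p.Prime) (hY : 1 ≤ Y) :
    ∑ q ∈ Finset.Icc 1 Y, (if p ∣ q then vM q else 0) ≤ Real.log Y := by
  classical
  have h1 : ∑ q ∈ Finset.Icc 1 Y, (if p ∣ q then vM q else 0)
      ≤ ∑ q ∈ (Finset.Icc 1 (Nat.log p Y)).image (fun e => p ^ e), vM q := by
    rw [← Finset.sum_filter]
    have : ∑ q ∈ (Finset.Icc 1 Y).filter (fun q => p ∣ q ∧ IsPrimePow q), vM q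
        = ∑ q ∈ (Finset.Icc 1 Y).filter (fun q => p ∣ q), vM q := by
      refine Finset.sum_subset ?_ ?_
      · intro q hq
        simp only [Finset.mem_filter] at hq ⊢
        exact ⟨hq.1, hq.2.1⟩
      · intro q hq hq2
        simp only [Finset.mem_filter, not_and] at hq hq2
        exact ArithmeticFunction.vonMangoldt_eq_zero_iff.2 (hq2 hq.1 hq.2)
    rw [← this]
    refine Finset.sum_le_sum_of_subset_of_nonneg ?_ (fun q _ _ => vM_nonneg q)
    intro q hq
    simp only [Finset.mem_filter, Finset.mem_Icc] at hq
    obtain ⟨⟨hq1, hq2⟩, hq3, hq4⟩ := hq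
    obtain ⟨p', e, hp', he, rfl⟩ := (isPrimePow_nat_iff _).1 hq4
    have : p = p' := (Nat.prime_dvd_prime_iff_eq hp hp').1 (hp.dvd_of_dvd_pow hq3)
    subst this
    rw [Finset.mem_image]
    exact ⟨e, Finset.mem_Icc.2 ⟨he, Nat.le_log_of_pow_le hp.one_lt hq2⟩, rfl⟩
  refine h1.trans ?_
  rw [Finset.sum_image (fun a _ b _ h => Nat.pow_right_injective hp.two_le h)]
  have h2 : ∀ e ∈ Finset.Icc 1 (Nat.log p Y), vM (p ^ e) = Real.log p := by
    intro e he
    have : e ≠ 0 := by have := (Finset.mem_Icc.1 he).1; omega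
    unfold vM
    rw [ArithmeticFunction.vonMangoldt_apply_pow this, ArithmeticFunction.vonMangoldt_apply_prime hp]
  rw [Finset.sum_congr rfl h2, Finset.sum_const, nsmul_eq_mul, ← Real.log_pow]
  simp only [Nat.card_Icc, Nat.add_sub_cancel]
  apply Real.log_le_log
  · have := hp.pos; positivity
  · exact_mod_cast Nat.pow_log_le_self p (by omega)

lemma sum_vM_noncoprime (m Y : ℕ) (hm : m ≠ 0) (hY : 1 ≤ Y) :
    ∑ q ∈ Finset.Icc 1 Y, (if q.Coprime m then 0 else vM q) ≤ m.primeFactors.card * Real.log Y := by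
  have h1 : ∀ q ∈ Finset.Icc 1 Y, (if q.Coprime m then 0 else vM q)
      ≤ ∑ p ∈ m.primeFactors, (if p ∣ q then vM q else 0) := by
    intro q _
    have hnn : ∀ p ∈ m.primeFactors, 0 ≤ (if p ∣ q then vM q else 0) := by
      intro p _; split_ifs
      · exact vM_nonneg q
      · exact le_rfl
    split_ifs with h
    · exact Finset.sum_nonneg hnn
    · obtain ⟨p, hp, hpq, hpm⟩ := Nat.Prime.not_coprime_iff_dvd.1 h
      have := Finset.single_le_sum hnn (Nat.mem_primeFactors.2 ⟨hp, hpm, hm⟩)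
      rwa [if_pos hpq] at this
  refine (Finset.sum_le_sum h1).trans ?_
  rw [Finset.sum_comm]
  refine (Finset.sum_le_sum fun p hp => sum_vM_p p Y (Nat.prime_of_mem_primeFactors hp) hY).trans ?_
  rw [Finset.sum_const, nsmul_eq_mul]

lemma E1_nonneg (j k n : ℕ) : 0 ≤ E1 j k n := by
  rw [E1_apply]
  refine Finset.sum_nonneg fun x _ => ?_
  split_ifs
  · exact le_rfl
  · exact mul_nonneg (vM_nonneg _) (fJ_nonneg _ _ _)

lemma bd_E1 (j k a : ℕ) (hf : Bd (fJ j k) a) : Bd (E1 j k) a := by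
  have h := (logdiff hf).const_mul j
  refine h.dom fun N hN => ?_
  rw [abs_of_nonneg (S_nonneg (E1_nonneg j k) N)]
  refine le_trans ?_ (le_abs_self _)
  have h1 : S (E1 j k) N = ∑ m ∈ Finset.Icc 1 N, ∑ q ∈ Finset.Icc 1 (N / m),
      (if q.Coprime m then 0 else vM q * fJ j k m) := by
    unfold S
    simp_rw [E1_apply]
    exact sum_antidiag (fun q m => if q.Coprime m then 0 else vM q * fJ j k m) N
  have h2 : (j:ℝ) * (Real.log N * S (fJ j k) N - S (lg (fJ j k)) N)
      = ∑ m ∈ Finset.Icc 1 N, (j:ℝ) * (Real.log N - Real.log m) * fJ j k m := by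
    unfold S
    rw [Finset.mul_sum, ← Finset.sum_sub_distrib, Finset.mul_sum]
    refine Finset.sum_congr rfl fun m _ => ?_
    rw [lg_apply]; ring
  rw [h1, h2]
  refine Finset.sum_le_sum fun m hm => ?_
  obtain ⟨hm1, hm2⟩ := Finset.mem_Icc.1 hm
  have hm0 : (0:ℝ) < m := by exact_mod_cast hm1
  have hN0 : (0:ℝ) < N := by exact_mod_cast hN
  have hY : 1 ≤ N / m := Nat.div_pos hm2 hm1
  have h3 : ∑ q ∈ Finset.Icc 1 (N / m), (if q.Coprime m then 0 else vM q * fJ j k m)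
      = (∑ q ∈ Finset.Icc 1 (N / m), (if q.Coprime m then 0 else vM q)) * fJ j k m := by
    rw [Finset.sum_mul]
    refine Finset.sum_congr rfl fun q _ => ?_
    split_ifs <;> simp
  rw [h3]
  by_cases hc : j < m.primeFactors.card
  · have : fJ j k m = 0 := by rw [fJ_apply, vJ_omega j m (by omega) hc, zero_mul]
    simp [this]
  · push Not at hc
    have h4 := sum_vM_noncoprime m (N / m) (by omega) hY
    have h5 : Real.log ((N / m : ℕ):ℝ) ≤ Real.log N - Real.log m := by
      rw [← Real.log_div hN0.ne' hm0.ne']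
      exact Real.log_le_log (by exact_mod_cast hY) Nat.cast_div_le
    have h6 : 0 ≤ Real.log ((N / m : ℕ):ℝ) := Real.log_natCast_nonneg _
    have h7 : (m.primeFactors.card : ℝ) ≤ j := by exact_mod_cast hc
    have := fJ_nonneg j k m
    have h8 : (m.primeFactors.card : ℝ) * Real.log ((N / m : ℕ):ℝ) ≤ j * (Real.log N - Real.log m) := by
      gcongr
    exact mul_le_mul_of_nonneg_right (h4.trans h8) this

/-- The main term of the recursion. -/
noncomputable def Mn (j k : ℕ) : ArithmeticFunction ℝ :=
  lg (fJ j k) + ∑ b ∈ Finset.Icc 1 k, (k.choose b : ℝ) • (lgp b vM * fJ j (k - b))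

lemma recursion (j k n : ℕ) :
    |(fJ (j + 1) k - Mn j k) n| ≤ (E1 j k +
      ∑ b ∈ Finset.Icc 1 k, (k.choose b : ℝ) • (lgp b hN * fJ j (k - b))) n := by
  have conv : ∀ h : ArithmeticFunction ℝ,
      (∑ b ∈ Finset.Icc 1 k, (k.choose b : ℝ) • (lgp b h * fJ j (k - b))) n
      = ∑ x ∈ n.divisorsAntidiagonal, h x.1 * vJ j x.2 * Gk k (Real.log x.1) x.2 := by
    intro h
    rw [af_sum_apply]
    simp_rw [ArithmeticFunction.smul_map, ArithmeticFunction.mul_apply, lgp_apply, fJ_apply, Gk,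
      smul_eq_mul, Finset.mul_sum]
    rw [Finset.sum_comm]
    refine Finset.sum_congr rfl fun x _ => Finset.sum_congr rfl fun b _ => ?_
    ring
  rw [af_sub_apply, Mn, ArithmeticFunction.add_apply, ArithmeticFunction.add_apply, conv, conv,
    E1_apply, ← Finset.sum_add_distrib]
  have h1 : fJ (j + 1) k n = lg (fJ j k) n
      + ∑ x ∈ n.divisorsAntidiagonal, vM x.1 * vJ j x.2 * vJ k (x.1 * x.2) := by
    rw [fJ_apply, vJ_succ, ArithmeticFunction.add_apply, lg_apply, lg_apply, fJ_apply,
      ArithmeticFunction.mul_apply, add_mul, Finset.sum_mul, mul_assoc]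
    congr 1
    refine Finset.sum_congr rfl fun x hx => ?_
    rw [(Nat.mem_divisorsAntidiagonal.1 hx).1]
  rw [h1, add_sub_add_left_eq_sub, ← Finset.sum_sub_distrib]
  refine (Finset.abs_sum_le_sum_abs _ _).trans (Finset.sum_le_sum fun x hx => ?_)
  obtain ⟨hx1, hx2⟩ := Nat.mem_divisorsAntidiagonal.1 hx
  have hx3 : x.2 ≠ 0 := by rintro h; simp [h] at hx1; exact hx2 hx1.symm
  by_cases hq : IsPrimePow x.1
  · have h2 := vJ_key k hq hx3
    have h3 : 0 ≤ vM x.1 * vJ j x.2 := mul_nonneg (vM_nonneg _) (vJ_nonneg _ _)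
    rw [← mul_sub, abs_mul, abs_of_nonneg h3]
    refine (mul_le_mul_of_nonneg_left h2 h3).trans (le_of_eq ?_)
    rw [hN_apply, fJ_apply]
    split_ifs <;> ring
  · have h2 : vM x.1 = 0 := ArithmeticFunction.vonMangoldt_eq_zero_iff.2 hq
    simp [h2, hN_apply]

end VMPNT

namespace VMPNT
open MeasureTheory Set Filter Topology

lemma fJ_comm (j k : ℕ) : fJ j k = fJ k j := by
  ext n; rw [fJ_apply, fJ_apply, mul_comm]

lemma fJ_zero_zero : fJ 0 0 = 1 := by
  ext n
  rw [fJ_apply, vJ_zero]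
  by_cases hn : n = 1
  · simp [hn]
  · simp [ArithmeticFunction.one_apply_ne hn]

lemma bd_zero (a : ℕ) : Bd 0 a := (Lit.zero a).bd

lemma lg_zero : lg 0 = 0 := by ext n; simp [lg_apply]

lemma base_sum (h : ArithmeticFunction ℝ) (l : ℕ) :
    ∑ b ∈ Finset.Icc 1 (l + 1), ((l + 1).choose b : ℝ) • (lgp b h * fJ 0 (l + 1 - b))
      = lgp (l + 1) h := by
  rw [Finset.sum_eq_single (l + 1)]
  · simp [fJ_zero_zero]
  · intro b hb hne
    have := Finset.mem_Icc.1 hb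
    rw [fJ_comm, fJ_zero _ (by omega)]; simp
  · intro h; simp at h

lemma asy_base (l : ℕ) : Asy (fJ 1 (l + 1)) ((l + 1).factorial : ℝ) (l + 1) := by
  have h0 : fJ 0 (l + 1) = 0 := by rw [fJ_comm, fJ_zero _ (by omega)]
  have hE : Lit (E1 0 (l + 1)) (l + 1) := (bd_E1 0 (l + 1) l (by rw [h0]; exact bd_zero l)).lit
  have hL : Lit (E1 0 (l + 1) +
      ∑ b ∈ Finset.Icc 1 (l + 1), ((l + 1).choose b : ℝ) • (lgp b hN * fJ 0 (l + 1 - b))) (l + 1) := by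
    rw [base_sum]
    exact hE.add (lit_lgp lit_hN _)
  have h1 := hL.dom (fun n _ => recursion 0 (l + 1) n)
  refine Asy.of_lit ?_ h1
  rw [Mn, h0, base_sum, lg_zero, zero_add]
  exact asy_lgp_vM _

noncomputable def cc (i k : ℕ) : ℝ := ((i:ℝ) + 1) * k * ((i + k - 1).factorial : ℝ)

lemma hockey (i l : ℕ) :
    ∑ s ∈ Finset.range l, ((i:ℝ) + 1) * ((i + s).factorial : ℝ) / (s.factorial : ℝ)
      = l * ((i + l).factorial : ℝ) / (l.factorial : ℝ) := by
  induction l with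
  | zero => simp
  | succ l ih =>
    rw [Finset.sum_range_succ, ih, ← add_assoc, Nat.factorial_succ, Nat.factorial_succ]
    push_cast
    have : (l.factorial : ℝ) ≠ 0 := by positivity
    field_simp
    ring

lemma cc_sum (i l : ℕ) :
    ∑ b ∈ Finset.Icc 1 (l + 1), ((l + 1).choose b : ℝ) * ((b.factorial : ℝ) * cc i (l + 1 - b))
      = (l + 1) * l * ((i + l).factorial : ℝ) := by
  have h1 : ∑ b ∈ Finset.Icc 1 (l + 1), ((l + 1).choose b : ℝ) * ((b.factorial : ℝ) * cc i (l + 1 - b))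
      = ∑ t ∈ Finset.range (l + 1), ((l + 1).choose t : ℝ) * (((l + 1 - t).factorial : ℝ) * cc i t) := by
    refine Finset.sum_bij' (fun b _ => l + 1 - b) (fun t _ => l + 1 - t) ?_ ?_ ?_ ?_ ?_
    · intro b hb; simp only [Finset.mem_Icc, Finset.mem_range] at *; omega
    · intro b hb; simp only [Finset.mem_Icc, Finset.mem_range] at *; omega
    · intro b hb; simp only [Finset.mem_Icc, Finset.mem_range] at *; omega
    · intro b hb; simp only [Finset.mem_Icc, Finset.mem_range] at *; omega
    · intro b hb
      have hb := Finset.mem_Icc.1 hb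
      rw [Nat.choose_symm hb.2, Nat.sub_sub_self hb.2]
  rw [h1, Finset.sum_range_succ']
  have h2 : ∀ s ∈ Finset.range l, ((l + 1).choose (s + 1) : ℝ)
      * (((l + 1 - (s + 1)).factorial : ℝ) * cc i (s + 1))
      = ((l + 1).factorial : ℝ) * (((i:ℝ) + 1) * ((i + s).factorial : ℝ) / (s.factorial : ℝ)) := by
    intro s hs
    have hs := Finset.mem_range.1 hs
    have h3 := Nat.choose_mul_factorial_mul_factorial (show s + 1 ≤ l + 1 by omega)
    have h4 : ((l + 1).choose (s + 1) : ℝ) * ((s + 1).factorial : ℝ) * ((l + 1 - (s + 1)).factorial : ℝ)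
        = ((l + 1).factorial : ℝ) := by exact_mod_cast h3
    rw [← h4, Nat.factorial_succ s, cc]
    have : (s.factorial : ℝ) ≠ 0 := by positivity
    rw [show i + (s + 1) - 1 = i + s by omega]
    push_cast
    field_simp
  rw [Finset.sum_congr rfl h2, ← Finset.mul_sum, hockey]
  have : (l.factorial : ℝ) ≠ 0 := by positivity
  rw [Nat.factorial_succ]
  simp [cc]
  field_simp

lemma cc_rec (i l : ℕ) :
    cc i (l + 1) * ((i + l + 1 : ℕ) + 1) + ∑ b ∈ Finset.Icc 1 (l + 1),
      ((l + 1).choose b : ℝ) * ((b.factorial : ℝ) * cc i (l + 1 - b)) = cc (i + 1) (l + 1) := by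
  rw [cc_sum, cc, cc, show i + 1 + (l + 1) - 1 = i + l + 1 by omega,
    show i + (l + 1) - 1 = i + l by omega, Nat.factorial_succ]
  push_cast; ring

theorem asy_main (i l : ℕ) : Asy (fJ (i + 1) (l + 1)) (cc i (l + 1)) (i + l + 1) := by
  induction i generalizing l with
  | zero =>
    have := asy_base l
    have e : cc 0 (l + 1) = ((l + 1).factorial : ℝ) := by
      rw [cc, Nat.factorial_succ]; simp
    rw [e]; simpa using this
  | succ i ih =>
    have hlit : Lit (E1 (i + 1) (l + 1) + ∑ b ∈ Finset.Icc 1 (l + 1),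
        ((l + 1).choose b : ℝ) • (lgp b hN * fJ (i + 1) (l + 1 - b))) (i + 1 + l + 1) := by
      refine Lit.add ?_ (Lit.sum _ _ _ fun b hb => Lit.smul ?_ _)
      · have := (bd_E1 (i + 1) (l + 1) _ (ih l).bd).lit
        rwa [show i + 1 + l + 1 = i + l + 1 + 1 by omega]
      · have hb := Finset.mem_Icc.1 hb
        rcases eq_or_lt_of_le hb.2 with rfl | hlt
        · rw [Nat.sub_self, fJ_zero _ (by omega), mul_zero]; exact Lit.zero _
        · obtain ⟨t, ht⟩ : ∃ t, l + 1 - b = t + 1 := ⟨l - b, by omega⟩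
          rw [ht]
          have := (lit_lgp lit_hN b).mul (ih t).bd (fJ_nonneg _ _)
          rwa [show b + (i + t + 1) + 1 = i + 1 + l + 1 by omega] at this
    have h1 := hlit.dom (fun n _ => recursion (i + 1) (l + 1) n)
    refine Asy.of_lit ?_ h1
    rw [Mn, ← cc_rec]
    refine Asy.add ?_ (Asy.sum _ _ _ _ fun b hb => Asy.smul ?_ _)
    · have := (ih l).lg
      rwa [show i + 1 + l + 1 = i + l + 1 + 1 by omega]
    · have hb := Finset.mem_Icc.1 hb
      rcases eq_or_lt_of_le hb.2 with rfl | hlt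
      · rw [Nat.sub_self, fJ_zero _ (by omega), mul_zero]
        simpa [cc] using Asy.zero _
      · obtain ⟨t, ht⟩ : ∃ t, l + 1 - b = t + 1 := ⟨l - b, by omega⟩
        rw [ht]
        have := (asy_lgp_vM b).mul (ih t) (fJ_nonneg _ _)
        rwa [show b + (i + t + 1) + 1 = i + 1 + l + 1 by omega] at this

end VMPNT

/-- `(1/X) Σ_{n ≤ X} Λ_j(n) Λ_k(n) ∼ (jk/(j+k−1)) (log X)^{j+k−1}` as `X → ∞`. -/
theorem covariance_of_vonMangoldt_integers (j k : ℕ) (hj : 1 ≤ j) (hk : 1 ≤ k) :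
    Tendsto
      (fun X : ℝ =>
        (∑ n ∈ Finset.Icc 1 ⌊X⌋₊, vmJ j n * vmJ k n) / (X * Real.log X ^ (j + k - 1)))
      atTop
      (nhds ((j : ℝ) * (k : ℝ) / ((j : ℝ) + (k : ℝ) - 1))) := by
  obtain ⟨i, rfl⟩ : ∃ i, j = i + 1 := ⟨j - 1, by omega⟩
  obtain ⟨l, rfl⟩ : ∃ l, k = l + 1 := ⟨k - 1, by omega⟩
  have h := (VMPNT.asy_main i l).tendsto_real
  have e : VMPNT.cc i (l + 1) / ((i + l + 1).factorial : ℝ)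
      = ((i + 1 : ℕ) : ℝ) * ((l + 1 : ℕ) : ℝ) / (((i + 1 : ℕ) : ℝ) + ((l + 1 : ℕ) : ℝ) - 1) := by
    rw [VMPNT.cc, show i + (l + 1) - 1 = i + l by omega, Nat.factorial_succ]
    have : ((i + l).factorial : ℝ) ≠ 0 := by positivity
    have h2 : ((i:ℝ) + 1 + ((l:ℝ) + 1) - 1) ≠ 0 := by
      have : (0:ℝ) < (i:ℝ) + 1 + ((l:ℝ) + 1) - 1 := by
        have : (0:ℝ) ≤ i := by positivity
        have : (0:ℝ) ≤ l := by positivity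
        linarith
      exact this.ne'
    have h3 : ((i:ℝ) + l + 1) ≠ 0 := by positivity
    push_cast
    rw [div_eq_div_iff (by positivity) h2]
    ring
  rw [e] at h
  refine h.congr fun X => ?_
  rw [show i + 1 + (l + 1) - 1 = i + l + 1 by omega]
  congr 1
  unfold VMPNT.S
  refine Finset.sum_congr rfl fun n _ => ?_
  rw [VMPNT.fJ_apply, VMPNT.vJ_apply, VMPNT.vJ_apply]
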